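/- arXiv:1401.6039 — 2 statements merged into one kernel-verified Lean document; each statement's English description precedes it below -/
import Mathlib

section
/- Sphere packing bound for constant composition codes over classical-quantum channels: for every classical-quantum channel x ↦ S_x with finite input alphabet X, every probability distribution P on X, every rate R > 0, and every ε with 0 < ε < R, the constant-composition reliability function satisfies E(R,P) ≤ E_sp^cc(R−ε, P), where E_sp^cc(R,P) = sup_{ρ ≥ 0} [E_0^cc(ρ,P) − ρR] and E_0^cc(ρ,P) = min over density operators F on H of −(1+ρ) Σ_{x∈X} P(x) log Tr(S_x^{1/(1+ρ)} F^{ρ/(1+ρ)}). -/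
open scoped BigOperators ComplexOrder
noncomputable section

namespace SPB

def negLog (t : ℝ) : EReal := if t ≤ 0 then (⊤ : EReal) else ((-Real.log t : ℝ) : EReal)

def mpow {ι : Type*} [Fintype ι] [DecidableEq ι] (A : Matrix ι ι ℂ) (r : ℝ) :
    Matrix ι ι ℂ :=
  if hA : A.IsHermitian then
    (hA.eigenvectorUnitary : Matrix ι ι ℂ) *
      Matrix.diagonal (fun i => ((if hA.eigenvalues i = 0 then (0 : ℝ)
        else hA.eigenvalues i ^ r : ℝ) : ℂ)) *
      (star (hA.eigenvectorUnitary : Matrix ι ι ℂ))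
  else 0

def IsDensity {ι : Type*} [Fintype ι] [DecidableEq ι] (A : Matrix ι ι ℂ) : Prop :=
  A.PosSemidef ∧ A.trace = 1

def IsProbDist {X : Type*} [Fintype X] (P : X → ℝ) : Prop :=
  (∀ x, 0 ≤ P x) ∧ ∑ x, P x = 1

def E0cc {X : Type*} [Fintype X] {d : ℕ} (S : X → Matrix (Fin d) (Fin d) ℂ)
    (ρ : ℝ) (P : X → ℝ) : EReal :=
  ⨅ F : {F : Matrix (Fin d) (Fin d) ℂ // IsDensity F},
    ((1 + ρ : ℝ) : EReal) *
      ∑ x, ((P x : ℝ) : EReal) *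
        negLog ((Matrix.trace (mpow (S x) (1 / (1 + ρ)) * mpow F.1 (ρ / (1 + ρ)))).re)

/-- The sphere packing exponent `E_sp^cc(R, P) = sup_{ρ ≥ 0} (E₀^cc(ρ,P) - ρ R)`. -/
def Espcc {X : Type*} [Fintype X] {d : ℕ} (S : X → Matrix (Fin d) (Fin d) ℂ)
    (R : ℝ) (P : X → ℝ) : EReal :=
  ⨆ ρ : {ρ : ℝ // 0 ≤ ρ}, E0cc S ρ.1 P - ((ρ.1 * R : ℝ) : EReal)

/-- The empirical composition (type) of a word. -/
def composition {X : Type*} [Fintype X] [DecidableEq X] {n : ℕ} (w : Fin n → X) :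
    X → ℝ :=
  fun x => ((Finset.univ.filter (fun i => w i = x)).card : ℝ) / (n : ℝ)

/-- The signal state of a codeword: the tensor (Kronecker) product of the letter states,
as a matrix indexed by `Fin n → Fin d`. -/
def signalState {X : Type*} {d n : ℕ} (S : X → Matrix (Fin d) (Fin d) ℂ)
    (w : Fin n → X) : Matrix (Fin n → Fin d) (Fin n → Fin d) ℂ :=
  Matrix.of fun i j => ∏ k, S (w k) (i k) (j k)

/-- A POVM (sub-measurement) with `M` outcomes. -/
def IsPOVM {ι : Type*} [Fintype ι] [DecidableEq ι] {M : ℕ}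
    (Pv : Fin M → Matrix ι ι ℂ) : Prop :=
  (∀ m, (Pv m).PosSemidef) ∧ (1 - ∑ m, Pv m).PosSemidef

/-- Maximum error probability of a code with decoding POVM `Pv`. -/
def maxError {X : Type*} {d n M : ℕ} (S : X → Matrix (Fin d) (Fin d) ℂ)
    (w : Fin M → Fin n → X)
    (Pv : Fin M → Matrix (Fin n → Fin d) (Fin n → Fin d) ℂ) : ℝ :=
  ⨆ m : Fin M, (1 - (Matrix.trace (Pv m * signalState S (w m))).re)

/-- `P_{e,max}^{(n)}(R, Q)`: the smallest maximum error probability of length-`n` codes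
with rate at least `R` all of whose codewords have composition `Q`. -/
def Pemax {X : Type*} [Fintype X] [DecidableEq X] {d : ℕ}
    (S : X → Matrix (Fin d) (Fin d) ℂ) (n : ℕ) (R : ℝ) (Q : X → ℝ) : ℝ :=
  sInf {e | ∃ (M : ℕ) (w : Fin M → Fin n → X)
      (Pv : Fin M → Matrix (Fin n → Fin d) (Fin n → Fin d) ℂ),
      Real.exp (n * R) ≤ M ∧ (∀ m, composition (w m) = Q) ∧ IsPOVM Pv ∧
      e = maxError S w Pv}

/-- The constant–composition reliability function `E(R,P)`: the limsup of
`-(1/n) log P_{e,max}^{(n)}(R,P_n)` over sequences of (realizable) compositions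
`P_n` tending to `P`. -/
def relE {X : Type*} [Fintype X] [DecidableEq X] {d : ℕ}
    (S : X → Matrix (Fin d) (Fin d) ℂ) (R : ℝ) (P : X → ℝ) : EReal :=
  ⨆ Pn : {Pn : ℕ → X → ℝ // Filter.Tendsto Pn Filter.atTop (nhds P) ∧
      ∀ n, ∃ w : Fin n → X, composition w = Pn n},
    Filter.limsup
      (fun n : ℕ => (((n : ℝ)⁻¹ : ℝ) : EReal) * negLog (Pemax S n R (Pn.1 n)))
      Filter.atTop

/-! Fix `t > E_sp^cc(R - ε, P)`. The function
`(F, ρ) ↦ -(1 + ρ) ∑ P(x) log Tr (S_x^{1/(1+ρ)} F^{ρ/(1+ρ)}) - ρ r` is convex in the density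
operator `F`, because fractional powers are operator concave, and concave in `ρ`, being an infimum
of affine functions of `ρ` by the Gibbs variational formula. Sion's minimax theorem therefore gives
one positive definite `F` for which, with `r` slightly above `R - ε`, it is at most `t` for all
`ρ ≥ 0` at once.

In a code of rate `R` some codeword is decoded with probability at most `exp (-n R)` when the
received state is `F^{⊗n}`, so its decoding operator is a test of the signal state against
`F^{⊗n}`. By Nussbaum and Szkoła such a test is, up to a factor `2` in the errors, no better than a
classical one between products of distributions `p_x` and `q_x` on pairs of eigenvectors of `S_x`
and `F`. Changing measure to the tilted distributions `V_x ∝ p_x^{1/(1+ρ)} q_x^{ρ/(1+ρ)}`, the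
error exponent is at most `∑ P(x) D(V_x ‖ p_x)` as soon as `∑ P(x) D(V_x ‖ q_x) < R`. By the
intermediate value theorem `ρ` can be chosen so that the second sum is just below `R` (or `ρ = 0`),
and then the bound on the function above makes the first sum at most `t`. -/

open Filter Function

section Chernoff

variable {κ X Z : Type*} [Fintype κ] [DecidableEq κ] [Finite X] [Fintype Z]

lemma sum_mul_exp_le_exp_sq {v g : Z → ℝ} (hv : IsProbDist v) (hg : ∑ z, v z * g z = 0)
    {C t : ℝ} (hC : ∀ z, |g z| ≤ C) (ht : 0 ≤ t) (htC : t * C ≤ 1) :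
    ∑ z, v z * Real.exp (t * g z) ≤ Real.exp ((t * C) ^ 2) := by
  have exp_le (z : Z) : Real.exp (t * g z) ≤ 1 + t * g z + (t * C) ^ 2 := by
    have habs : |t * g z| ≤ t * C := by
      rw [abs_mul, abs_of_nonneg ht]
      exact mul_le_mul_of_nonneg_left (hC z) ht
    have htaylor := (abs_le.mp (Real.abs_exp_sub_one_sub_id_le (habs.trans htC))).2
    have hsq : (t * g z) ^ 2 ≤ (t * C) ^ 2 := sq_le_sq' (abs_le.mp habs).1 (abs_le.mp habs).2
    linarith
  calc ∑ z, v z * Real.exp (t * g z)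
      ≤ ∑ z, v z * (1 + t * g z + (t * C) ^ 2) :=
        Finset.sum_le_sum fun z _ => mul_le_mul_of_nonneg_left (exp_le z) (hv.1 z)
    _ = ∑ z, (v z + t * (v z * g z) + v z * (t * C) ^ 2) :=
        Finset.sum_congr rfl fun z _ => by ring
    _ = 1 + (t * C) ^ 2 := by
        rw [Finset.sum_add_distrib, Finset.sum_add_distrib, ← Finset.mul_sum, ← Finset.sum_mul,
          hg, hv.2]
        ring
    _ ≤ Real.exp ((t * C) ^ 2) := by linarith [Real.add_one_le_exp ((t * C) ^ 2)]

lemma sum_prod_tail_le {v : κ → Z → ℝ} (hv : ∀ k z, 0 ≤ v k z) (g : κ → Z → ℝ)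
    (a : ℝ) {t : ℝ} (ht : 0 ≤ t) :
    ∑ z : κ → Z with a ≤ ∑ k, g k (z k), ∏ k, v k (z k) ≤
      Real.exp (-(t * a)) * ∏ k, ∑ y, v k y * Real.exp (t * g k y) := by
  have weight_nonneg (z : κ → Z) : 0 ≤ ∏ k, v k (z k) := Finset.prod_nonneg fun k _ => hv _ _
  have exp_sum (z : κ → Z) : (∏ k, v k (z k)) * Real.exp (t * (∑ k, g k (z k) - a)) =
      Real.exp (-(t * a)) * ∏ k, v k (z k) * Real.exp (t * g k (z k)) := by
    rw [Finset.prod_mul_distrib, ← Real.exp_sum, ← Finset.mul_sum, mul_left_comm, ← Real.exp_add]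
    ring_nf
  calc ∑ z : κ → Z with a ≤ ∑ k, g k (z k), ∏ k, v k (z k)
      ≤ ∑ z : κ → Z with a ≤ ∑ k, g k (z k),
          (∏ k, v k (z k)) * Real.exp (t * (∑ k, g k (z k) - a)) := by
        refine Finset.sum_le_sum fun z hz => le_mul_of_one_le_right (weight_nonneg z) ?_
        exact Real.one_le_exp (mul_nonneg ht (sub_nonneg.mpr (Finset.mem_filter.mp hz).2))
    _ ≤ ∑ z : κ → Z, (∏ k, v k (z k)) * Real.exp (t * (∑ k, g k (z k) - a)) :=
        Finset.sum_le_sum_of_subset_of_nonneg (Finset.filter_subset _ _) fun z _ _ =>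
          mul_nonneg (weight_nonneg z) (Real.exp_nonneg _)
    _ = Real.exp (-(t * a)) * ∏ k, ∑ y, v k y * Real.exp (t * g k y) := by
        simp_rw [exp_sum, ← Finset.mul_sum, Fintype.prod_sum]

lemma exists_sum_prod_tail_le_exp {v g : X → Z → ℝ} (hv : ∀ x, IsProbDist (v x))
    (hg : ∀ x, ∑ z, v x z * g x z = 0) {δ : ℝ} (hδ : 0 < δ) :
    ∃ c > 0, ∀ (n : ℕ) (w : Fin n → X),
      ∑ z : Fin n → Z with n * δ ≤ ∑ k, g (w k) (z k), ∏ k, v (w k) (z k) ≤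
        Real.exp (-(n * c)) := by
  obtain ⟨C, hC0, hC⟩ : ∃ C : ℝ, 0 < C ∧ ∀ x z, |g x z| ≤ C := by
    obtain ⟨C, hC⟩ := Finite.bddAbove_range fun y : X × Z => |g y.1 y.2|
    exact ⟨max C 1, by positivity, fun x z => (hC ⟨(x, z), rfl⟩).trans (le_max_left _ _)⟩
  obtain ⟨t, ht0, htC, htδ⟩ : ∃ t > 0, t * C ≤ 1 ∧ t * C ^ 2 ≤ δ / 2 := by
    refine ⟨min (1 / C) (δ / 2 / C ^ 2), by positivity, ?_, ?_⟩
    · exact (le_div_iff₀ hC0).mp (min_le_left _ _)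
    · exact (le_div_iff₀ (by positivity)).mp (min_le_right _ _)
  refine ⟨t * δ / 2, by positivity, fun n w => ?_⟩
  have letter_mgf_le (x : X) : ∑ z, v x z * Real.exp (t * g x z) ≤ Real.exp (t * δ / 2) := by
    refine (sum_mul_exp_le_exp_sq (hv x) (hg x) (hC x) ht0.le htC).trans ?_
    gcongr
    nlinarith
  calc ∑ z : Fin n → Z with n * δ ≤ ∑ k, g (w k) (z k), ∏ k, v (w k) (z k)
      ≤ Real.exp (-(t * (n * δ))) * ∏ k, ∑ y, v (w k) y * Real.exp (t * g (w k) y) :=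
        sum_prod_tail_le (fun k z => (hv _).1 z) (fun k => g (w k)) _ ht0.le
    _ ≤ Real.exp (-(t * (n * δ))) * ∏ _k : Fin n, Real.exp (t * δ / 2) := by
        gcongr
        · exact fun k _ => Finset.sum_nonneg fun y _ =>
            mul_nonneg ((hv _).1 y) (Real.exp_nonneg _)
        · exact letter_mgf_le _
    _ = Real.exp (-(n * (t * δ / 2))) := by
        rw [Finset.prod_const, Finset.card_univ, Fintype.card_fin, ← Real.exp_nat_mul,
          ← Real.exp_add]
        ring_nf

lemma eventually_exp_neg_mul_le {c ε : ℝ} (hc : 0 < c) (hε : 0 < ε) :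
    ∀ᶠ n : ℕ in atTop, Real.exp (-(n * c)) ≤ ε :=
  (Real.tendsto_exp_neg_atTop_nhds_zero.comp
    (tendsto_natCast_atTop_atTop.atTop_mul_const hc)).eventually_le_const hε

end Chernoff

section RelativeEntropy

variable {κ X Z : Type*} [Fintype κ] [Finite X] [Fintype Z]

/-- The relative entropy `D(v‖p)` of weights on a finite set. It is real-valued, hence meaningful
only when the support of `v` is contained in that of `p`. -/
def kl (v p : Z → ℝ) : ℝ := ∑ z, v z * Real.log (v z / p z)

/-- The conditional relative entropy `D(v‖p|Q) = ∑ x, Q x * D(v x‖p x)`. -/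
def condKl {X : Type*} [Fintype X] (Q : X → ℝ) (v p : X → Z → ℝ) : ℝ := ∑ x, Q x * kl (v x) (p x)

lemma kl_self (v : Z → ℝ) : kl v v = 0 := by
  refine Finset.sum_eq_zero fun z _ => ?_
  by_cases hz : v z = 0 <;> simp [hz]

lemma kl_nonneg {v u : Z → ℝ} (hv : IsProbDist v) (hu : IsProbDist u)
    (hvu : support v ⊆ support u) : 0 ≤ kl v u := by
  have sub_le (z : Z) : v z - u z ≤ v z * Real.log (v z / u z) := by
    by_cases hz : u z = 0
    · simp [notMem_support.mp (mt (@hvu z) (by simpa using hz)), hz]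
    · have hklFun := InformationTheory.klFun_nonneg (div_nonneg (hv.1 z) (hu.1 z))
      have hmul := mul_nonneg (hu.1 z) hklFun
      have hcancel : u z * (v z / u z) = v z := mul_div_cancel₀ _ hz
      rw [InformationTheory.klFun, mul_sub, mul_add, ← mul_assoc, hcancel] at hmul
      linarith
  calc 0 = ∑ z, (v z - u z) := by rw [Finset.sum_sub_distrib, hv.2, hu.2, sub_self]
    _ ≤ kl v u := Finset.sum_le_sum fun z _ => sub_le z

lemma exp_neg_mul_prod_le_prod {v u : κ → ℝ} (hv : ∀ k, 0 ≤ v k) (hu : ∀ k, 0 ≤ u k)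
    (hvu : support v ⊆ support u) {a : ℝ} (ha : ∑ k, Real.log (v k / u k) ≤ a) :
    Real.exp (-a) * ∏ k, v k ≤ ∏ k, u k := by
  by_cases hv_zero : ∃ k, v k = 0
  · obtain ⟨k, hk⟩ := hv_zero
    rw [Finset.prod_eq_zero (Finset.mem_univ k) hk, mul_zero]
    exact Finset.prod_nonneg fun k _ => hu k
  push Not at hv_zero
  have hu_pos (k : κ) : 0 < u k := (hu k).lt_of_ne' (hvu (hv_zero k))
  have hv_pos (k : κ) : 0 < v k := (hv k).lt_of_ne' (hv_zero k)
  have prod_eq : ∏ k, v k = (∏ k, u k) * Real.exp (∑ k, Real.log (v k / u k)) := by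
    rw [Real.exp_sum, ← Finset.prod_mul_distrib]
    refine Finset.prod_congr rfl fun k _ => ?_
    rw [Real.exp_log (div_pos (hv_pos k) (hu_pos k)), mul_div_cancel₀ _ (hu_pos k).ne']
  rw [prod_eq, mul_left_comm, ← Real.exp_add]
  refine mul_le_of_le_one_right (Finset.prod_nonneg fun k _ => hu k) ?_
  exact Real.exp_le_one_iff.mpr (by linarith)

lemma eventually_sum_logLikelihood_tail_le {v : X → Z → ℝ} (hv : ∀ x, IsProbDist (v x))
    (u : X → Z → ℝ) {δ : ℝ} (hδ : 0 < δ) :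
    ∀ᶠ n : ℕ in atTop, ∀ w : Fin n → X,
      ∑ z : Fin n → Z with ∑ k, kl (v (w k)) (u (w k)) + n * δ ≤
        ∑ k, Real.log (v (w k) (z k) / u (w k) (z k)), ∏ k, v (w k) (z k) ≤ 1 / 4 := by
  have centred (x : X) : ∑ z, v x z * (Real.log (v x z / u x z) - kl (v x) (u x)) = 0 := by
    simp_rw [mul_sub, Finset.sum_sub_distrib, ← Finset.sum_mul, (hv x).2, one_mul, kl, sub_self]
  obtain ⟨c, hc, htail⟩ := exists_sum_prod_tail_le_exp hv centred hδ
  filter_upwards [eventually_exp_neg_mul_le hc (ε := 1 / 4) (by norm_num)] with n hn w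
  refine le_trans (le_of_eq ?_) ((htail n w).trans hn)
  simp_rw [Finset.sum_sub_distrib, le_sub_iff_add_le']

lemma min_exp_mul_prod_le_min_prod {p q v : κ → ℝ} (hp : ∀ k, 0 ≤ p k) (hq : ∀ k, 0 ≤ q k)
    (hv : ∀ k, 0 ≤ v k) (hvp : support v ⊆ support p) (hvq : support v ⊆ support q)
    {a b γ : ℝ} (hγ : 0 ≤ γ) (ha : ∑ k, Real.log (v k / p k) ≤ a)
    (hb : ∑ k, Real.log (v k / q k) ≤ b) :
    min (Real.exp (-a)) (γ * Real.exp (-b)) * ∏ k, v k ≤ min (∏ k, p k) (γ * ∏ k, q k) := by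
  rw [min_mul_of_nonneg _ _ (Finset.prod_nonneg fun k _ => hv k), mul_assoc]
  exact min_le_min (exp_neg_mul_prod_le_prod hv hp hvp ha)
    (mul_le_mul_of_nonneg_left (exp_neg_mul_prod_le_prod hv hq hvq hb) hγ)

lemma half_mul_le_sum_of_tails_le {Ω : Type*} [Fintype Ω] {V f : Ω → ℝ} (hV : IsProbDist V)
    (hf : ∀ z, 0 ≤ f z) {m : ℝ} (hm : 0 ≤ m) {A B : Ω → Prop} [DecidablePred A] [DecidablePred B]
    (hA : ∑ z with A z, V z ≤ 1 / 4) (hB : ∑ z with B z, V z ≤ 1 / 4)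
    (h : ∀ z, ¬A z → ¬B z → m * V z ≤ f z) : 1 / 2 * m ≤ ∑ z, f z := by
  have pointwise (z : Ω) :
      m * (V z - (if A z then V z else 0) - (if B z then V z else 0)) ≤ f z := by
    split_ifs with hAz hBz hBz
    · exact le_trans (by nlinarith [hV.1 z]) (hf z)
    · simpa using hf z
    · simpa using hf z
    · simpa using h z hAz hBz
  refine le_trans ?_ (Finset.sum_le_sum fun z _ => pointwise z)
  rw [← Finset.mul_sum, Finset.sum_sub_distrib, Finset.sum_sub_distrib, ← Finset.sum_filter,
    ← Finset.sum_filter, hV.2]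
  nlinarith

lemma isProbDist_prod [DecidableEq κ] {v : κ → Z → ℝ} (hv : ∀ k, IsProbDist (v k)) :
    IsProbDist fun z : κ → Z => ∏ k, v k (z k) := by
  refine ⟨fun z => Finset.prod_nonneg fun k _ => (hv k).1 _, ?_⟩
  simp_rw [← Fintype.prod_sum, (hv _).2, Finset.prod_const_one]

-- With `v`-probability at least one half, both log-likelihood ratios are within `n * δ` of their
-- means.
lemma eventually_half_min_exp_kl_le_sum_min {p q v : X → Z → ℝ}
    (hp : ∀ x z, 0 ≤ p x z) (hq : ∀ x z, 0 ≤ q x z) (hv : ∀ x, IsProbDist (v x))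
    (hvp : ∀ x, support (v x) ⊆ support (p x)) (hvq : ∀ x, support (v x) ⊆ support (q x))
    {δ : ℝ} (hδ : 0 < δ) :
    ∀ᶠ n : ℕ in atTop, ∀ w : Fin n → X, ∀ γ ≥ 0,
      1 / 2 * min (Real.exp (-(∑ k, kl (v (w k)) (p (w k)) + n * δ)))
        (γ * Real.exp (-(∑ k, kl (v (w k)) (q (w k)) + n * δ))) ≤
      ∑ z : Fin n → Z, min (∏ k, p (w k) (z k)) (γ * ∏ k, q (w k) (z k)) := by
  filter_upwards [eventually_sum_logLikelihood_tail_le hv p hδ,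
    eventually_sum_logLikelihood_tail_le hv q hδ] with n htail_p htail_q w γ hγ
  refine half_mul_le_sum_of_tails_le (isProbDist_prod fun k => hv (w k)) (fun z => ?_)
    (by positivity) (htail_p w) (htail_q w) fun z typical_p typical_q => ?_
  · exact le_min (Finset.prod_nonneg fun k _ => hp _ _)
      (mul_nonneg hγ (Finset.prod_nonneg fun k _ => hq _ _))
  · exact min_exp_mul_prod_le_min_prod (fun k => hp (w k) (z k)) (fun k => hq (w k) (z k))
      (fun k => (hv (w k)).1 (z k)) (fun k hk => hvp _ hk) (fun k hk => hvq _ hk) hγ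
      (not_le.mp typical_p).le (not_le.mp typical_q).le

end RelativeEntropy

section Tilting

variable {X Z : Type*} {p q v : Z → ℝ} {ρ : ℝ}

/-- The unnormalized tilted weight `p^{1/(1+ρ)} q^{ρ/(1+ρ)}`. -/
def tiltWeight (p q : Z → ℝ) (ρ : ℝ) (z : Z) : ℝ := p z ^ (1 / (1 + ρ)) * q z ^ (ρ / (1 + ρ))

lemma tiltWeight_eq_zero (q : Z → ℝ) (hρ : 0 ≤ ρ) {z : Z} (hz : p z = 0) :
    tiltWeight p q ρ z = 0 := by
  rw [tiltWeight, hz, Real.zero_rpow (by positivity), zero_mul]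

variable [Fintype X] [Fintype Z]

/-- A hypothesis pair: a probability distribution `p` and a nonnegative weight `q` with `p ≪ q`,
so that all relative entropies of distributions `v ≪ p` are finite. -/
structure IsHypothesisPair (p q : Z → ℝ) : Prop where
  isProbDist : IsProbDist p
  nonneg_right : ∀ z, 0 ≤ q z
  support_subset : support p ⊆ support q

/-- The normalization constant `∑ p^{1/(1+ρ)} q^{ρ/(1+ρ)}` of the tilted distribution. -/
def tiltSum (p q : Z → ℝ) (ρ : ℝ) : ℝ := ∑ z, tiltWeight p q ρ z

/-- The tilted distribution, proportional to `p^{1/(1+ρ)} q^{ρ/(1+ρ)}`: it runs from `p` at `ρ = 0`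
towards `q` as `ρ → ∞`. -/
def tilt (p q : Z → ℝ) (ρ : ℝ) (z : Z) : ℝ := tiltWeight p q ρ z / tiltSum p q ρ

/-- The exponent `-(1 + ρ) log ∑ p^{1/(1+ρ)} q^{ρ/(1+ρ)}`, the classical counterpart of the letter
terms of `E0cc`. -/
def tiltExponent (p q : Z → ℝ) (ρ : ℝ) : ℝ := -((1 + ρ) * Real.log (tiltSum p q ρ))

lemma support_tilt_subset (p q : Z → ℝ) (hρ : 0 ≤ ρ) : support (tilt p q ρ) ⊆ support p :=
  fun _ hz hpz => hz (by rw [tilt, tiltWeight_eq_zero q hρ hpz, zero_div])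

namespace IsHypothesisPair

lemma tiltWeight_nonneg (h : IsHypothesisPair p q) (ρ : ℝ) (z : Z) : 0 ≤ tiltWeight p q ρ z :=
  mul_nonneg (Real.rpow_nonneg (h.isProbDist.1 z) _) (Real.rpow_nonneg (h.nonneg_right z) _)

lemma pos_right (h : IsHypothesisPair p q) {z : Z} (hz : 0 < p z) : 0 < q z :=
  (h.nonneg_right z).lt_of_ne' (h.support_subset hz.ne')

lemma tiltWeight_pos (h : IsHypothesisPair p q) (ρ : ℝ) {z : Z} (hz : 0 < p z) :
    0 < tiltWeight p q ρ z :=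
  mul_pos (Real.rpow_pos_of_pos hz _) (Real.rpow_pos_of_pos (h.pos_right hz) _)

lemma tiltSum_pos (h : IsHypothesisPair p q) (ρ : ℝ) : 0 < tiltSum p q ρ := by
  obtain ⟨z, -, hz⟩ : ∃ z ∈ Finset.univ, 0 < p z :=
    Finset.exists_lt_of_sum_lt (f := 0) (by simp [h.isProbDist.2])
  exact Finset.sum_pos' (fun z _ => h.tiltWeight_nonneg ρ z)
    ⟨z, Finset.mem_univ z, h.tiltWeight_pos ρ hz⟩

lemma isProbDist_tilt (h : IsHypothesisPair p q) (ρ : ℝ) : IsProbDist (tilt p q ρ) := by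
  refine ⟨fun z => div_nonneg (h.tiltWeight_nonneg ρ z) (h.tiltSum_pos ρ).le, ?_⟩
  simp_rw [tilt, ← Finset.sum_div]
  exact div_self (h.tiltSum_pos ρ).ne'

lemma tilt_pos (h : IsHypothesisPair p q) (ρ : ℝ) {z : Z} (hz : 0 < p z) : 0 < tilt p q ρ z :=
  div_pos (h.tiltWeight_pos ρ hz) (h.tiltSum_pos ρ)

lemma log_tilt (h : IsHypothesisPair p q) {z : Z} (hz : 0 < p z) :
    Real.log (tilt p q ρ z) = 1 / (1 + ρ) * Real.log (p z) + ρ / (1 + ρ) * Real.log (q z)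
      - Real.log (tiltSum p q ρ) := by
  have hq := h.pos_right hz
  rw [tilt, Real.log_div (h.tiltWeight_pos ρ hz).ne' (h.tiltSum_pos ρ).ne', tiltWeight,
    Real.log_mul (Real.rpow_pos_of_pos hz _).ne' (Real.rpow_pos_of_pos hq _).ne',
    Real.log_rpow hz, Real.log_rpow hq]

lemma kl_add_mul_kl_eq (h : IsHypothesisPair p q) (hρ : 0 ≤ ρ) (hv : IsProbDist v)
    (hvp : support v ⊆ support p) :
    kl v p + ρ * kl v q = (1 + ρ) * kl v (tilt p q ρ) + tiltExponent p q ρ := by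
  have pointwise (z : Z) : v z * Real.log (v z / p z) + ρ * (v z * Real.log (v z / q z)) =
      (1 + ρ) * (v z * Real.log (v z / tilt p q ρ z)) + v z * tiltExponent p q ρ := by
    by_cases hvz : v z = 0
    · simp [hvz]
    have hpz : 0 < p z := (h.isProbDist.1 z).lt_of_ne' (hvp hvz)
    rw [Real.log_div hvz hpz.ne', Real.log_div hvz (h.pos_right hpz).ne',
      Real.log_div hvz (h.tilt_pos ρ hpz).ne', h.log_tilt hpz, tiltExponent]
    field_simp
    ring
  simp_rw [kl, Finset.mul_sum, ← Finset.sum_add_distrib, pointwise, Finset.sum_add_distrib,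
    ← Finset.sum_mul, hv.2, one_mul]

lemma kl_tilt_add_mul_kl_tilt (h : IsHypothesisPair p q) (hρ : 0 ≤ ρ) :
    kl (tilt p q ρ) p + ρ * kl (tilt p q ρ) q = tiltExponent p q ρ := by
  rw [h.kl_add_mul_kl_eq hρ (h.isProbDist_tilt ρ) (support_tilt_subset p q hρ), kl_self, mul_zero,
    zero_add]

lemma tiltExponent_le_kl_add_mul_kl (h : IsHypothesisPair p q) (hρ : 0 ≤ ρ) (hv : IsProbDist v)
    (hvp : support v ⊆ support p) : tiltExponent p q ρ ≤ kl v p + ρ * kl v q := by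
  rw [h.kl_add_mul_kl_eq hρ hv hvp]
  refine le_add_of_nonneg_left (mul_nonneg (by positivity) ?_)
  exact kl_nonneg hv (h.isProbDist_tilt ρ) fun z hz =>
    (h.tilt_pos ρ ((h.isProbDist.1 z).lt_of_ne' (hvp hz))).ne'

-- The exponent is a minimum over `v` of functions that are affine in `ρ`.
lemma concaveOn_tiltExponent (h : IsHypothesisPair p q) :
    ConcaveOn ℝ (Set.Ici 0) (tiltExponent p q) := by
  refine ⟨convex_Ici 0, fun x hx y hy a b ha hb hab => ?_⟩
  simp only [Set.mem_Ici, smul_eq_mul] at *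
  have hρ : 0 ≤ a * x + b * y := by positivity
  set v := tilt p q (a * x + b * y)
  have hv : IsProbDist v := h.isProbDist_tilt _
  have hvp : support v ⊆ support p := support_tilt_subset p q hρ
  calc a * tiltExponent p q x + b * tiltExponent p q y
      ≤ a * (kl v p + x * kl v q) + b * (kl v p + y * kl v q) := by
        gcongr
        · exact h.tiltExponent_le_kl_add_mul_kl hx hv hvp
        · exact h.tiltExponent_le_kl_add_mul_kl hy hv hvp
    _ = kl v p + (a * x + b * y) * kl v q := by linear_combination kl v p * hab
    _ = tiltExponent p q (a * x + b * y) := h.kl_tilt_add_mul_kl_tilt hρ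

lemma continuousOn_tiltWeight (h : IsHypothesisPair p q) (z : Z) :
    ContinuousOn (fun ρ => tiltWeight p q ρ z) (Set.Ici 0) := by
  rcases (h.isProbDist.1 z).eq_or_lt with hz | hz
  · exact continuousOn_const.congr fun ρ hρ => tiltWeight_eq_zero q hρ hz.symm
  have one_add_ne (ρ : ℝ) (hρ : ρ ∈ Set.Ici 0) : 1 + ρ ≠ 0 := by
    have : (0 : ℝ) ≤ ρ := hρ
    positivity
  refine (continuousOn_const.rpow ?_ fun _ _ => Or.inl hz.ne').mul
    (continuousOn_const.rpow ?_ fun _ _ => Or.inl (h.pos_right hz).ne')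
  · exact continuousOn_const.div (by fun_prop) one_add_ne
  · exact continuousOn_id.div (by fun_prop) one_add_ne

lemma continuousOn_tiltSum (h : IsHypothesisPair p q) :
    ContinuousOn (tiltSum p q) (Set.Ici 0) :=
  continuousOn_finsetSum _ fun z _ => h.continuousOn_tiltWeight z

lemma continuousOn_tiltExponent (h : IsHypothesisPair p q) :
    ContinuousOn (tiltExponent p q) (Set.Ici 0) :=
  ((continuousOn_const.add continuousOn_id).mul
    (h.continuousOn_tiltSum.log fun ρ _ => (h.tiltSum_pos ρ).ne')).neg

lemma continuousOn_kl_tilt_right (h : IsHypothesisPair p q) :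
    ContinuousOn (fun ρ => kl (tilt p q ρ) q) (Set.Ici 0) := by
  refine continuousOn_finsetSum _ fun z _ => ?_
  rcases (h.isProbDist.1 z).eq_or_lt with hz | hz
  · refine (continuousOn_const (c := (0 : ℝ))).congr fun ρ hρ => ?_
    simp only [tilt, tiltWeight_eq_zero q hρ hz.symm, zero_div, zero_mul]
  have hcont : ContinuousOn (fun ρ => tilt p q ρ z) (Set.Ici 0) :=
    (h.continuousOn_tiltWeight z).div h.continuousOn_tiltSum fun ρ _ => (h.tiltSum_pos ρ).ne'
  exact hcont.mul ((hcont.div_const _).log fun ρ _ =>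
    (div_pos (h.tilt_pos ρ hz) (h.pos_right hz)).ne')

lemma kl_tilt_left_nonneg (h : IsHypothesisPair p q) (hρ : 0 ≤ ρ) : 0 ≤ kl (tilt p q ρ) p :=
  kl_nonneg (h.isProbDist_tilt ρ) h.isProbDist (support_tilt_subset p q hρ)

end IsHypothesisPair

-- The Lagrangian bound at `ρ` controls `D + ρ (D' - r)`. Either `D' ≤ r'` already at `ρ = 0`, or
-- `D'` takes the value `r'` at some `ρ`, because the bound fails for large `ρ` if `D'` stays
-- above `r'`.
lemma exists_nonneg_le_and_le_of_add_mul_sub_le {D D' : ℝ → ℝ} (hD : ∀ ρ, 0 ≤ ρ → 0 ≤ D ρ)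
    (hD' : ContinuousOn D' (Set.Ici 0)) {r r' t : ℝ} (hr : r < r')
    (h : ∀ ρ, 0 ≤ ρ → D ρ + ρ * (D' ρ - r) ≤ t) :
    ∃ ρ, 0 ≤ ρ ∧ D ρ ≤ t ∧ D' ρ ≤ r' := by
  by_cases h_zero : D' 0 ≤ r'
  · exact ⟨0, le_rfl, by simpa using h 0 le_rfl, h_zero⟩
  obtain ⟨ρ₁, hρ₁, h_lt⟩ : ∃ ρ, 0 ≤ ρ ∧ D' ρ < r' := by
    by_contra! h_ge
    have hρ : 0 ≤ (|t| + 1) / (r' - r) := div_nonneg (by positivity) (by linarith)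
    have hcancel : (|t| + 1) / (r' - r) * (r' - r) = |t| + 1 := div_mul_cancel₀ _ (by linarith)
    nlinarith [h _ hρ, h_ge _ hρ, hD _ hρ, le_abs_self t]
  obtain ⟨ρ, hρ, h_eq⟩ := intermediate_value_Icc' hρ₁ (hD'.mono Set.Icc_subset_Ici_self)
    ⟨h_lt.le, (not_le.mp h_zero).le⟩
  exact ⟨ρ, hρ.1, by nlinarith [h ρ hρ.1, hρ.1], h_eq.le⟩

lemma exists_condKl_tilt_le {P : X → ℝ} (hP : ∀ x, 0 ≤ P x) {p q : X → Z → ℝ}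
    (h : ∀ x, IsHypothesisPair (p x) (q x)) {r r' t : ℝ} (hr : r < r')
    (ht : ∀ ρ, 0 ≤ ρ → ∑ x, P x * tiltExponent (p x) (q x) ρ - ρ * r ≤ t) :
    ∃ ρ, 0 ≤ ρ ∧ condKl P (fun x => tilt (p x) (q x) ρ) p ≤ t ∧
      condKl P (fun x => tilt (p x) (q x) ρ) q ≤ r' := by
  refine exists_nonneg_le_and_le_of_add_mul_sub_le
    (D' := fun ρ => condKl P (fun x => tilt (p x) (q x) ρ) q)
    (fun ρ hρ => Finset.sum_nonneg fun x _ => mul_nonneg (hP x) ((h x).kl_tilt_left_nonneg hρ))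
    (continuousOn_finsetSum _ fun x _ =>
      continuousOn_const.mul (h x).continuousOn_kl_tilt_right) hr fun ρ hρ => ?_
  refine le_of_eq_of_le ?_ (ht ρ hρ)
  unfold condKl
  simp_rw [← (h _).kl_tilt_add_mul_kl_tilt hρ, mul_add, Finset.sum_add_distrib, mul_left_comm _ ρ,
    ← Finset.mul_sum]
  ring

end Tilting

section SpectralMatrix

open Matrix

variable {ι : Type*} [Fintype ι]

open scoped MatrixOrder in
lemma re_trace_mul_nonneg {A B : Matrix ι ι ℂ} (hA : A.PosSemidef) (hB : B.PosSemidef) :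
    0 ≤ (A * B).trace.re := by
  classical
  obtain ⟨C, rfl⟩ := CStarAlgebra.nonneg_iff_eq_star_mul_self.mp hB.nonneg
  rw [← Matrix.mul_assoc, trace_mul_comm, ← Matrix.mul_assoc]
  exact (Complex.le_def.mp (hA.mul_mul_conjTranspose_same C).trace_nonneg).1

variable [DecidableEq ι]

/-- The matrix `U diag(a) Uᴴ`; for unitary `U` it is the Hermitian matrix with eigenvalues `a` in
the orthonormal basis formed by the columns of `U`. -/
def spectralMatrix (U : Matrix ι ι ℂ) (a : ι → ℝ) : Matrix ι ι ℂ :=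
  U * diagonal (fun i => (a i : ℂ)) * Uᴴ

lemma posSemidef_spectralMatrix (U : Matrix ι ι ℂ) {a : ι → ℝ} (ha : ∀ i, 0 ≤ a i) :
    (spectralMatrix U a).PosSemidef :=
  (PosSemidef.diagonal fun i => Complex.zero_le_real.mpr (ha i)).mul_mul_conjTranspose_same U

lemma spectralMatrix_apply_self (U : Matrix ι ι ℂ) (a : ι → ℝ) (i : ι) :
    spectralMatrix U a i i = ((∑ j, ‖U i j‖ ^ 2 * a j : ℝ) : ℂ) := by
  rw [spectralMatrix, Matrix.mul_apply, Complex.ofReal_sum]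
  refine Finset.sum_congr rfl fun j _ => ?_
  rw [mul_diagonal, conjTranspose_apply, mul_right_comm, Complex.star_def, Complex.mul_conj,
    Complex.normSq_eq_norm_sq, ← Complex.ofReal_mul]

lemma trace_mul_spectralMatrix (M U : Matrix ι ι ℂ) (a : ι → ℝ) :
    (M * spectralMatrix U a).trace = ∑ i, (Uᴴ * M * U) i i * a i := by
  rw [spectralMatrix, ← Matrix.mul_assoc, trace_mul_comm, ← Matrix.mul_assoc,
    ← Matrix.mul_assoc]
  simp only [trace, Matrix.diag_apply, mul_diagonal]

lemma re_trace_spectralMatrix_mul_spectralMatrix (U V : Matrix ι ι ℂ) (a b : ι → ℝ) :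
    (spectralMatrix U a * spectralMatrix V b).trace.re =
      ∑ i, ∑ j, ‖(Uᴴ * V) i j‖ ^ 2 * a i * b j := by
  have conj_eq : Uᴴ * spectralMatrix V b * U = spectralMatrix (Uᴴ * V) b := by
    simp only [spectralMatrix, conjTranspose_mul, conjTranspose_conjTranspose, Matrix.mul_assoc]
  rw [trace_mul_comm, trace_mul_spectralMatrix, conj_eq]
  simp_rw [spectralMatrix_apply_self, ← Complex.ofReal_mul, ← Complex.ofReal_sum,
    Complex.ofReal_re, Finset.sum_mul, mul_right_comm]

lemma conjTranspose_mul_sq_mul_apply_self {K V : Matrix ι ι ℂ} (hK : K.IsHermitian)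
    (hV : V * Vᴴ = 1) (U : Matrix ι ι ℂ) (i : ι) :
    (Uᴴ * (K * K) * U) i i = ((∑ j, ‖(Uᴴ * K * V) i j‖ ^ 2 : ℝ) : ℂ) := by
  have conj_eq : Uᴴ * (K * K) * U = spectralMatrix (Uᴴ * K * V) 1 := by
    calc Uᴴ * (K * K) * U = Uᴴ * K * (V * Vᴴ) * (K * U) := by
          rw [hV, Matrix.mul_one]
          simp only [Matrix.mul_assoc]
      _ = spectralMatrix (Uᴴ * K * V) 1 := by
          simp [spectralMatrix, conjTranspose_mul, hK.eq, Matrix.mul_assoc]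
  rw [conj_eq, spectralMatrix_apply_self]
  simp only [Pi.one_apply, mul_one]

lemma posSemidef_sub_mul_self {K : Matrix ι ι ℂ} (hK : K.PosSemidef) (hK' : (1 - K).PosSemidef) :
    (K - K * K).PosSemidef := by
  have : K - K * K = Kᴴ * (1 - K) * K + (1 - K)ᴴ * K * (1 - K) := by
    rw [hK.1.eq, hK'.1.eq]
    noncomm_ring
  rw [this]
  exact (hK'.conjTranspose_mul_mul_same K).add (hK.conjTranspose_mul_mul_same (1 - K))

lemma sum_norm_sq_mul_le_re_trace_mul {K V : Matrix ι ι ℂ} (hK : K.PosSemidef)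
    (hK' : (1 - K).PosSemidef) (hV : V * Vᴴ = 1) (U : Matrix ι ι ℂ) {a : ι → ℝ}
    (ha : ∀ i, 0 ≤ a i) :
    ∑ i, ∑ j, ‖(Uᴴ * K * V) i j‖ ^ 2 * a i ≤ (K * spectralMatrix U a).trace.re := by
  have trace_sq : (K * K * spectralMatrix U a).trace.re =
      ∑ i, ∑ j, ‖(Uᴴ * K * V) i j‖ ^ 2 * a i := by
    simp_rw [trace_mul_spectralMatrix, conjTranspose_mul_sq_mul_apply_self hK.1 hV,
      ← Complex.ofReal_mul, ← Complex.ofReal_sum, Complex.ofReal_re, Finset.sum_mul]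
  have hnonneg := re_trace_mul_nonneg (posSemidef_sub_mul_self hK hK')
    (posSemidef_spectralMatrix U ha)
  rw [Matrix.sub_mul, trace_sub, Complex.sub_re, trace_sq] at hnonneg
  linarith

lemma half_norm_add_sq_mul_min_le (k l : ℂ) {a b : ℝ} (ha : 0 ≤ a) (hb : 0 ≤ b) :
    1 / 2 * (‖k + l‖ ^ 2 * min a b) ≤ ‖k‖ ^ 2 * a + ‖l‖ ^ 2 * b := by
  have norm_add_sq : ‖k + l‖ ^ 2 ≤ 2 * (‖k‖ ^ 2 + ‖l‖ ^ 2) :=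
    (pow_le_pow_left₀ (norm_nonneg _) (norm_add_le k l) 2).trans add_sq_le
  calc 1 / 2 * (‖k + l‖ ^ 2 * min a b)
      ≤ 1 / 2 * (2 * (‖k‖ ^ 2 + ‖l‖ ^ 2) * min a b) := by gcongr
    _ = ‖k‖ ^ 2 * min a b + ‖l‖ ^ 2 * min a b := by ring
    _ ≤ ‖k‖ ^ 2 * a + ‖l‖ ^ 2 * b := by
        gcongr
        · exact min_le_left a b
        · exact min_le_right a b

-- The two error amplitudes of the test add up to the overlap `(Uᴴ * V) i j`.
lemma half_sum_min_le_re_trace_add {L U V : Matrix ι ι ℂ} (hL : L.PosSemidef)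
    (hL' : (1 - L).PosSemidef) (hU : U * Uᴴ = 1) (hV : V * Vᴴ = 1) {a b : ι → ℝ}
    (ha : ∀ i, 0 ≤ a i) (hb : ∀ i, 0 ≤ b i) {γ : ℝ} (hγ : 0 ≤ γ) :
    1 / 2 * ∑ i, ∑ j, min (‖(Uᴴ * V) i j‖ ^ 2 * a i) (γ * (‖(Uᴴ * V) i j‖ ^ 2 * b j)) ≤
      ((1 - L) * spectralMatrix U a).trace.re + γ * (L * spectralMatrix V b).trace.re := by
  have hfirst := sum_norm_sq_mul_le_re_trace_mul hL' (by simpa using hL) hV U ha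
  have hsecond : ∑ i, ∑ j, ‖(Uᴴ * L * V) i j‖ ^ 2 * b j ≤ (L * spectralMatrix V b).trace.re := by
    refine le_of_eq_of_le ?_ (sum_norm_sq_mul_le_re_trace_mul hL hL' hU V hb)
    have conjTranspose_eq : Vᴴ * L * U = (Uᴴ * L * V)ᴴ := by
      simp only [conjTranspose_mul, conjTranspose_conjTranspose, hL.1.eq, Matrix.mul_assoc]
    simp_rw [conjTranspose_eq, conjTranspose_apply, norm_star]
    exact Finset.sum_comm
  refine le_trans ?_ (add_le_add hfirst (mul_le_mul_of_nonneg_left hsecond hγ))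
  simp_rw [Finset.mul_sum, ← Finset.sum_add_distrib]
  refine Finset.sum_le_sum fun i _ => Finset.sum_le_sum fun j _ => ?_
  have overlap_eq : (Uᴴ * V) i j = (Uᴴ * (1 - L) * V) i j + (Uᴴ * L * V) i j := by
    rw [← Matrix.add_apply, ← Matrix.add_mul, ← Matrix.mul_add, sub_add_cancel, Matrix.mul_one]
  rw [mul_left_comm γ, ← mul_min_of_nonneg _ _ (by positivity), overlap_eq, mul_left_comm γ]
  exact half_norm_add_sq_mul_min_le _ _ (ha i) (mul_nonneg hγ (hb j))

end SpectralMatrix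

section PiTensor

open Matrix

variable {κ m n l R : Type*} [Fintype κ]

/-- The tensor product of a finite family of matrices, with rows and columns indexed by
functions. -/
def piTensor [CommMonoid R] (f : κ → Matrix m n R) : Matrix (κ → m) (κ → n) R :=
  Matrix.of fun i j => ∏ k, f k (i k) (j k)

lemma piTensor_apply [CommMonoid R] (f : κ → Matrix m n R) (i : κ → m) (j : κ → n) :
    piTensor f i j = ∏ k, f k (i k) (j k) := rfl

lemma conjTranspose_piTensor [CommSemiring R] [StarRing R] (f : κ → Matrix m n R) :
    (piTensor f)ᴴ = piTensor fun k => (f k)ᴴ := by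
  ext i j
  simp only [conjTranspose_apply, piTensor_apply, star_prod]

lemma piTensor_diagonal [DecidableEq m] [CommSemiring R] (a : κ → m → R) :
    piTensor (fun k => diagonal (a k)) = diagonal fun i => ∏ k, a k (i k) := by
  ext i j
  rw [piTensor_apply]
  by_cases hij : i = j
  · subst hij
    simp only [diagonal_apply_eq]
  · obtain ⟨k, hk⟩ := Function.ne_iff.mp hij
    rw [diagonal_apply_ne _ hij]
    exact Finset.prod_eq_zero (Finset.mem_univ k) (diagonal_apply_ne _ hk)

lemma piTensor_one [DecidableEq m] [CommSemiring R] :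
    piTensor (fun _ : κ => (1 : Matrix m m R)) = 1 := by
  simpa using piTensor_diagonal (1 : κ → m → R)

variable [DecidableEq κ] [Fintype m] [CommSemiring R]

lemma piTensor_mul (f : κ → Matrix l m R) (g : κ → Matrix m n R) :
    piTensor f * piTensor g = piTensor fun k => f k * g k := by
  ext i j
  simp_rw [Matrix.mul_apply, piTensor_apply, ← Finset.prod_mul_distrib, Matrix.mul_apply,
    Fintype.prod_sum]

lemma trace_piTensor (f : κ → Matrix m m R) : (piTensor f).trace = ∏ k, (f k).trace :=
  (Fintype.prod_sum fun k y => f k y y).symm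

lemma piTensor_mul_conjTranspose_eq_one [DecidableEq m] [StarRing R] {U : κ → Matrix m m R}
    (hU : ∀ k, U k * (U k)ᴴ = 1) : piTensor U * (piTensor U)ᴴ = 1 := by
  rw [conjTranspose_piTensor, piTensor_mul]
  simp_rw [hU]
  exact piTensor_one

lemma piTensor_spectralMatrix [DecidableEq m] (U : κ → Matrix m m ℂ) (a : κ → m → ℝ) :
    piTensor (fun k => spectralMatrix (U k) (a k)) =
      spectralMatrix (piTensor U) fun i => ∏ k, a k (i k) := by
  simp_rw [spectralMatrix, Complex.ofReal_prod]
  rw [← piTensor_diagonal fun k i => (a k i : ℂ), conjTranspose_piTensor, piTensor_mul,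
    piTensor_mul]

end PiTensor

section NussbaumSzkola

open Matrix

variable {κ ι : Type*} [Fintype κ] [DecidableEq κ] [Fintype ι] [DecidableEq ι] {A B : Matrix ι ι ℂ}

lemma spectralMatrix_eigenvalues (hA : A.IsHermitian) :
    spectralMatrix hA.eigenvectorUnitary hA.eigenvalues = A :=
  hA.spectral_theorem.symm

lemma piTensor_eq_spectralMatrix {A : κ → Matrix ι ι ℂ} (hA : ∀ k, (A k).IsHermitian) :
    piTensor A = spectralMatrix (piTensor fun k => ((hA k).eigenvectorUnitary : Matrix ι ι ℂ))
      fun i => ∏ k, (hA k).eigenvalues (i k) := by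
  rw [← piTensor_spectralMatrix]
  exact congrArg piTensor (funext fun k => (spectralMatrix_eigenvalues (hA k)).symm)

/-- The transition probabilities `|⟨uᵢ, vⱼ⟩|²` between the eigenbases of `A` and `B`. -/
def eigenOverlap (hA : A.IsHermitian) (hB : B.IsHermitian) (i j : ι) : ℝ :=
  ‖((hA.eigenvectorUnitary : Matrix ι ι ℂ)ᴴ * (hB.eigenvectorUnitary : Matrix ι ι ℂ)) i j‖ ^ 2

/-- The Nussbaum–Szkoła distribution `(i, j) ↦ |⟨uᵢ, vⱼ⟩|² αᵢ` of the first of two Hermitian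
matrices, where the `αᵢ` are its eigenvalues. -/
def nsLeft (hA : A.IsHermitian) (hB : B.IsHermitian) (z : ι × ι) : ℝ :=
  eigenOverlap hA hB z.1 z.2 * hA.eigenvalues z.1

/-- The Nussbaum–Szkoła distribution `(i, j) ↦ |⟨uᵢ, vⱼ⟩|² βⱼ` of the second of two Hermitian
matrices, where the `βⱼ` are its eigenvalues. -/
def nsRight (hA : A.IsHermitian) (hB : B.IsHermitian) (z : ι × ι) : ℝ :=
  eigenOverlap hA hB z.1 z.2 * hB.eigenvalues z.2

lemma eigenOverlap_nonneg (hA : A.IsHermitian) (hB : B.IsHermitian) (i j : ι) :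
    0 ≤ eigenOverlap hA hB i j :=
  sq_nonneg _

lemma eigenvectorUnitary_mul_conjTranspose (hA : A.IsHermitian) :
    (hA.eigenvectorUnitary : Matrix ι ι ℂ) * (hA.eigenvectorUnitary : Matrix ι ι ℂ)ᴴ = 1 :=
  Unitary.mul_star_self_of_mem hA.eigenvectorUnitary.2

lemma sum_eigenOverlap (hA : A.IsHermitian) (hB : B.IsHermitian) (i : ι) :
    ∑ j, eigenOverlap hA hB i j = 1 := by
  have h := conjTranspose_mul_sq_mul_apply_self isHermitian_one
    (eigenvectorUnitary_mul_conjTranspose hB) (hA.eigenvectorUnitary : Matrix ι ι ℂ) i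
  have unitary : (hA.eigenvectorUnitary : Matrix ι ι ℂ)ᴴ * hA.eigenvectorUnitary = 1 :=
    Unitary.star_mul_self_of_mem hA.eigenvectorUnitary.2
  rw [Matrix.mul_one, Matrix.mul_one, unitary, one_apply_eq] at h
  exact_mod_cast h.symm

lemma IsDensity.sum_eigenvalues (hA : IsDensity A) : ∑ i, hA.1.1.eigenvalues i = 1 := by
  have trace_eq : (1 : ℂ) = ∑ i, ((hA.1.1.eigenvalues i : ℝ) : ℂ) :=
    hA.2.symm.trans hA.1.1.trace_eq_sum_eigenvalues
  exact_mod_cast trace_eq.symm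

lemma isHypothesisPair_ns (hA : IsDensity A) (hB : B.PosDef) :
    IsHypothesisPair (nsLeft hA.1.1 hB.1) (nsRight hA.1.1 hB.1) where
  isProbDist := by
    refine ⟨fun z => mul_nonneg (eigenOverlap_nonneg _ _ _ _) (hA.1.eigenvalues_nonneg _), ?_⟩
    simp_rw [Fintype.sum_prod_type, nsLeft, ← Finset.sum_mul, sum_eigenOverlap, one_mul]
    exact hA.sum_eigenvalues
  nonneg_right z := mul_nonneg (eigenOverlap_nonneg _ _ _ _) (hB.eigenvalues_pos _).le
  support_subset z hz := mul_ne_zero (left_ne_zero_of_mul hz) (hB.eigenvalues_pos _).ne'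

lemma isDensity_piTensor {A : κ → Matrix ι ι ℂ} (hA : ∀ k, IsDensity (A k)) :
    IsDensity (piTensor A) := by
  refine ⟨?_, ?_⟩
  · rw [piTensor_eq_spectralMatrix fun k => (hA k).1.1]
    exact posSemidef_spectralMatrix _
      fun i => Finset.prod_nonneg fun k _ => (hA k).1.eigenvalues_nonneg _
  · simp_rw [trace_piTensor, (hA _).2, Finset.prod_const_one]

lemma half_sum_min_prod_ns_le {A B : κ → Matrix ι ι ℂ} (hA : ∀ k, (A k).PosSemidef)
    (hB : ∀ k, (B k).PosSemidef) {L : Matrix (κ → ι) (κ → ι) ℂ} (hL : L.PosSemidef)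
    (hL' : (1 - L).PosSemidef) {γ : ℝ} (hγ : 0 ≤ γ) :
    1 / 2 * ∑ z : κ → ι × ι, min (∏ k, nsLeft (hA k).1 (hB k).1 (z k))
        (γ * ∏ k, nsRight (hA k).1 (hB k).1 (z k)) ≤
      ((1 - L) * piTensor A).trace.re + γ * (L * piTensor B).trace.re := by
  rw [piTensor_eq_spectralMatrix fun k => (hA k).1, piTensor_eq_spectralMatrix fun k => (hB k).1]
  refine le_of_eq_of_le ?_ (half_sum_min_le_re_trace_add hL hL'
    (piTensor_mul_conjTranspose_eq_one fun k => eigenvectorUnitary_mul_conjTranspose (hA k).1)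
    (piTensor_mul_conjTranspose_eq_one fun k => eigenvectorUnitary_mul_conjTranspose (hB k).1)
    (fun i => Finset.prod_nonneg fun k _ => (hA k).eigenvalues_nonneg _)
    (fun i => Finset.prod_nonneg fun k _ => (hB k).eigenvalues_nonneg _) hγ)
  rw [← Fintype.sum_prod_type']
  congr 1
  refine Fintype.sum_equiv (Equiv.arrowProdEquivProdArrow κ (fun _ => ι) fun _ => ι) _ _
    fun z => ?_
  simp only [nsLeft, nsRight, eigenOverlap, Equiv.arrowProdEquivProdArrow_apply,
    conjTranspose_piTensor, piTensor_mul, piTensor_apply, norm_prod, Finset.prod_mul_distrib,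
    Finset.prod_pow]

end NussbaumSzkola

section MatrixPower

open Matrix
open scoped MatrixOrder Matrix.Norms.L2Operator

variable {ι : Type*} [Fintype ι] {A B C : Matrix ι ι ℂ}

lemma re_trace_mul_le_re_trace_mul (hA : A.PosSemidef) (hBC : B ≤ C) :
    (A * B).trace.re ≤ (A * C).trace.re := by
  have h := re_trace_mul_nonneg hA (Matrix.le_iff.mp hBC)
  rwa [Matrix.mul_sub, trace_sub, Complex.sub_re, sub_nonneg] at h

variable [DecidableEq ι]

lemma mpow_eq_spectralMatrix (hA : A.IsHermitian) (r : ℝ) :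
    mpow A r = spectralMatrix hA.eigenvectorUnitary
      fun i => if hA.eigenvalues i = 0 then 0 else hA.eigenvalues i ^ r := by
  rw [mpow, dif_pos hA]
  rfl

lemma rpow_eq_spectralMatrix (hA : A.PosSemidef) (r : ℝ) :
    A ^ r = spectralMatrix hA.1.eigenvectorUnitary fun i => hA.1.eigenvalues i ^ r := by
  rw [CFC.rpow_eq_cfc_real hA.nonneg, hA.1.cfc_eq]
  rfl

lemma posSemidef_mpow (hA : A.PosSemidef) (r : ℝ) : (mpow A r).PosSemidef := by
  rw [mpow_eq_spectralMatrix hA.1]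
  refine posSemidef_spectralMatrix _ fun i => ?_
  split_ifs
  · exact le_rfl
  · exact Real.rpow_nonneg (hA.eigenvalues_nonneg i) r

lemma mpow_eq_rpow (hA : A.PosDef) (r : ℝ) : mpow A r = A ^ r := by
  rw [mpow_eq_spectralMatrix hA.1, rpow_eq_spectralMatrix hA.posSemidef]
  simp_rw [if_neg (hA.eigenvalues_pos _).ne']

lemma spectralMatrix_mono (U : Matrix ι ι ℂ) : Monotone (spectralMatrix U) := by
  intro a b hab
  have sub_eq : spectralMatrix U b - spectralMatrix U a = spectralMatrix U (b - a) := by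
    simp_rw [spectralMatrix, ← Matrix.sub_mul, ← Matrix.mul_sub, diagonal_sub, Pi.sub_apply,
      Complex.ofReal_sub]
  rw [Matrix.le_iff, sub_eq]
  exact posSemidef_spectralMatrix U fun i => sub_nonneg.mpr (hab i)

-- The two sides differ only for `r = 0`, where `0 ^ r = 0` on the left and `1` on the right.
lemma mpow_le_rpow (hA : A.PosSemidef) (r : ℝ) : mpow A r ≤ A ^ r := by
  rw [mpow_eq_spectralMatrix hA.1, rpow_eq_spectralMatrix hA]
  refine spectralMatrix_mono _ fun i => ?_
  dsimp only
  split_ifs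
  · exact Real.rpow_nonneg (hA.eigenvalues_nonneg i) r
  · exact le_rfl

lemma re_trace_mpow_mul_mpow_eq_tiltSum (hA : A.PosSemidef) (hB : B.PosDef) {ρ : ℝ}
    (hρ : 0 ≤ ρ) :
    (mpow A (1 / (1 + ρ)) * mpow B (ρ / (1 + ρ))).trace.re =
      tiltSum (nsLeft hA.1 hB.1) (nsRight hA.1 hB.1) ρ := by
  have left_ne : 1 / (1 + ρ) ≠ 0 := by positivity
  have add_eq : 1 / (1 + ρ) + ρ / (1 + ρ) = 1 := by field_simp
  rw [mpow_eq_spectralMatrix hA.1, mpow_eq_spectralMatrix hB.1,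
    re_trace_spectralMatrix_mul_spectralMatrix, tiltSum, Fintype.sum_prod_type]
  refine Finset.sum_congr rfl fun i _ => Finset.sum_congr rfl fun j _ => ?_
  have hα := hA.eigenvalues_nonneg i
  have hβ := hB.eigenvalues_pos j
  have left_pow : (if hA.1.eigenvalues i = 0 then 0 else hA.1.eigenvalues i ^ (1 / (1 + ρ))) =
      hA.1.eigenvalues i ^ (1 / (1 + ρ)) := by
    split_ifs with h_zero
    · rw [h_zero, Real.zero_rpow left_ne]
    · rfl
  have overlap_pow : eigenOverlap hA.1 hB.1 i j = eigenOverlap hA.1 hB.1 i j ^ (1 / (1 + ρ)) *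
      eigenOverlap hA.1 hB.1 i j ^ (ρ / (1 + ρ)) := by
    rw [← Real.rpow_add' (eigenOverlap_nonneg _ _ _ _) (by rw [add_eq]; exact one_ne_zero),
      add_eq, Real.rpow_one]
  rw [left_pow, if_neg hβ.ne', ← eigenOverlap, tiltWeight, nsLeft, nsRight,
    Real.mul_rpow (eigenOverlap_nonneg _ _ _ _) hα,
    Real.mul_rpow (eigenOverlap_nonneg _ _ _ _) hβ.le, mul_mul_mul_comm, ← overlap_pow, mul_assoc]

end MatrixPower

section DensityGe

open Matrix
open scoped MatrixOrder Matrix.Norms.L2Operator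

variable {ι : Type*} [Fintype ι] [DecidableEq ι] {A F : Matrix ι ι ℂ} {c p : ℝ}

/-- The density operators with smallest eigenvalue at least `c`. For `c > 0` this is a compact
convex set on which matrix powers are continuous. -/
def densityGe (ι : Type*) [Fintype ι] [DecidableEq ι] (c : ℝ) : Set (Matrix ι ι ℂ) :=
  {F | F.trace = 1} ∩ Set.Ici (c • 1)

lemma posDef_of_mem_densityGe (hc : 0 < c) (hF : F ∈ densityGe ι c) : F.PosDef := by
  have h := PosDef.posSemidef_add (Matrix.le_iff.mp hF.2) (PosDef.one.smul hc)
  rwa [sub_add_cancel] at h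

lemma convex_densityGe (c : ℝ) : Convex ℝ (densityGe ι c) :=
  ((convex_singleton 1).linear_preimage (traceLinearMap ι ℝ ℂ)).inter (convex_Ici _)

lemma IsDensity.le_one (hF : IsDensity F) : F ≤ 1 := by
  have eigenvalues_le : hF.1.1.eigenvalues ≤ 1 := fun i =>
    (Finset.single_le_sum (fun j _ => hF.1.eigenvalues_nonneg j) (Finset.mem_univ i)).trans_eq
      hF.sum_eigenvalues
  calc F = spectralMatrix hF.1.1.eigenvectorUnitary hF.1.1.eigenvalues :=
        (spectralMatrix_eigenvalues hF.1.1).symm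
    _ ≤ spectralMatrix hF.1.1.eigenvectorUnitary 1 := spectralMatrix_mono _ eigenvalues_le
    _ = 1 := by simp [spectralMatrix, eigenvectorUnitary_mul_conjTranspose]

lemma isCompact_densityGe (hc : 0 < c) : IsCompact (densityGe ι c) := by
  have : ProperSpace (Matrix ι ι ℂ) := FiniteDimensional.proper ℂ _
  refine Metric.isCompact_of_isClosed_isBounded
    ((isClosed_eq continuous_id.matrix_trace continuous_const).inter isClosed_Ici)
    (isBounded_iff_forall_norm_le.mpr ⟨1, fun F hF => ?_⟩)
  have hF_psd := (posDef_of_mem_densityGe hc hF).posSemidef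
  exact (CStarAlgebra.norm_le_one_iff_of_nonneg F hF_psd.nonneg).mpr
    (IsDensity.le_one ⟨hF_psd, hF.1⟩)

lemma concaveOn_re_trace_mul_rpow (hA : A.PosSemidef) (hp : p ∈ Set.Icc (0 : ℝ) 1) :
    ConcaveOn ℝ (Set.Ici (0 : Matrix ι ι ℂ)) fun F => (A * F ^ p).trace.re := by
  refine ⟨convex_Ici 0, fun F hF G hG a b ha hb hab => ?_⟩
  have h := re_trace_mul_le_re_trace_mul hA ((CFC.concaveOn_rpow hp).2 hF hG ha hb hab)
  simpa only [Matrix.mul_add, Matrix.mul_smul, trace_add, trace_smul, Complex.add_re,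
    Complex.smul_re] using h

lemma concaveOn_re_trace_mul_mpow (hA : A.PosSemidef) (hc : 0 < c) (hp : p ∈ Set.Icc (0 : ℝ) 1) :
    ConcaveOn ℝ (densityGe ι c) fun F => (A * mpow F p).trace.re := by
  refine ConcaveOn.congr ((concaveOn_re_trace_mul_rpow hA hp).subset
    (fun F hF => (posDef_of_mem_densityGe hc hF).posSemidef.nonneg) (convex_densityGe c))
    fun F hF => ?_
  rw [mpow_eq_rpow (posDef_of_mem_densityGe hc hF)]

lemma continuousOn_re_trace_mul_mpow (A : Matrix ι ι ℂ) (p : ℝ) (hc : 0 < c) :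
    ContinuousOn (fun F => (A * mpow F p).trace.re) (densityGe ι c) := by
  have continuousOn_rpow : ContinuousOn (fun F : Matrix ι ι ℂ => F ^ p) (densityGe ι c) :=
    (CFC.continuousOn_rpow p).mono fun F hF =>
      isStrictlyPositive_iff_posDef.mpr (posDef_of_mem_densityGe hc hF)
  have continuous_re_trace : Continuous fun B : Matrix ι ι ℂ => (A * B).trace.re :=
    Complex.continuous_re.comp (continuous_const.matrix_mul continuous_id).matrix_trace
  refine (continuous_re_trace.comp_continuousOn continuousOn_rpow).congr fun F hF => ?_
  rw [mpow_eq_rpow (posDef_of_mem_densityGe hc hF), Function.comp_apply]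

lemma re_trace_mul_rpow_nonneg (hA : A.PosSemidef) (hF : F.PosSemidef) (p : ℝ) :
    0 ≤ (A * F ^ p).trace.re :=
  (re_trace_mul_nonneg hA (posSemidef_mpow hF p)).trans
    (re_trace_mul_le_re_trace_mul hA (mpow_le_rpow hF p))

/-- The mixture `θ F + (1 - θ) 1 / d` of `F` with the maximally mixed state. -/
def mixWithUniform (θ : ℝ) (F : Matrix ι ι ℂ) : Matrix ι ι ℂ :=
  θ • F + (1 - θ) • ((Fintype.card ι : ℝ)⁻¹ • 1)

lemma mixWithUniform_mem_densityGe [Nonempty ι] (hF : IsDensity F) {θ : ℝ} (hθ : 0 ≤ θ) :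
    mixWithUniform θ F ∈ densityGe ι ((1 - θ) * (Fintype.card ι : ℝ)⁻¹) := by
  refine ⟨?_, ?_⟩
  · have : (Fintype.card ι : ℂ) ≠ 0 := Nat.cast_ne_zero.mpr Fintype.card_ne_zero
    simp [mixWithUniform, hF.2, this]
  · rw [Set.mem_Ici, mixWithUniform, smul_smul]
    exact le_add_of_nonneg_left (smul_nonneg hθ hF.1.nonneg)

lemma mul_re_trace_mul_mpow_le [Nonempty ι] (hA : A.PosSemidef) (hF : IsDensity F) {θ : ℝ}
    (hθ : 0 ≤ θ) (hθ' : θ < 1) (hp : p ∈ Set.Icc (0 : ℝ) 1) :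
    θ * (A * mpow F p).trace.re ≤ (A * mpow (mixWithUniform θ F) p).trace.re := by
  have hmix := posDef_of_mem_densityGe
    (mul_pos (sub_pos.mpr hθ') (by positivity)) (mixWithUniform_mem_densityGe hF hθ)
  have uniform_psd : ((Fintype.card ι : ℝ)⁻¹ • (1 : Matrix ι ι ℂ)).PosSemidef :=
    PosSemidef.one.smul (by positivity)
  calc θ * (A * mpow F p).trace.re ≤ θ * (A * F ^ p).trace.re :=
        mul_le_mul_of_nonneg_left (re_trace_mul_le_re_trace_mul hA (mpow_le_rpow hF.1 p)) hθ
    _ ≤ θ * (A * F ^ p).trace.re +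
          (1 - θ) * (A * ((Fintype.card ι : ℝ)⁻¹ • (1 : Matrix ι ι ℂ)) ^ p).trace.re :=
        le_add_of_nonneg_right
          (mul_nonneg (sub_nonneg.mpr hθ'.le) (re_trace_mul_rpow_nonneg hA uniform_psd p))
    _ ≤ (A * mixWithUniform θ F ^ p).trace.re :=
        (concaveOn_re_trace_mul_rpow hA hp).2 hF.1.nonneg uniform_psd.nonneg hθ
          (sub_nonneg.mpr hθ'.le) (add_sub_cancel _ _)
    _ = (A * mpow (mixWithUniform θ F) p).trace.re := by rw [mpow_eq_rpow hmix]

end DensityGe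

section Minimax

variable {E E' : Type*} [AddCommGroup E] [Module ℝ E] [AddCommGroup E'] [Module ℝ E']

-- `Sion.minimax` needs values in a complete linear order; real values need its finite version.
lemma exists_forall_le_of_forall_exists_le [TopologicalSpace E] [IsTopologicalAddGroup E]
    [ContinuousSMul ℝ E] [TopologicalSpace E'] [IsTopologicalAddGroup E'] [ContinuousSMul ℝ E']
    {K : Set E} {L : Set E'} {f : E → E' → ℝ} (hK : K.Nonempty) (hK_compact : IsCompact K)
    (hK_convex : Convex ℝ K) (hL : Convex ℝ L)
    (continuousOn_left : ∀ y ∈ L, ContinuousOn (f · y) K)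
    (convexOn_left : ∀ y ∈ L, ConvexOn ℝ K (f · y))
    (continuousOn_right : ∀ x ∈ K, ContinuousOn (f x) L)
    (concaveOn_right : ∀ x ∈ K, ConcaveOn ℝ L (f x))
    {t : ℝ} (h : ∀ y ∈ L, ∃ x ∈ K, f x y ≤ t) : ∃ x ∈ K, ∀ y ∈ L, f x y ≤ t := by
  by_contra! h_lt
  have lsc : ∀ y ∈ L, LowerSemicontinuousOn (f · y) K :=
    fun y hy => (continuousOn_left y hy).lowerSemicontinuousOn
  obtain ⟨s, hs⟩ : ∃ s : Finset L, ∀ x ∈ K, ∃ y ∈ s, t < f x y := by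
    rw [← LowerSemicontinuousOn.inter_biInter_preimage_Iic_eq_empty_iff_exists_finset
      hK_compact lsc]
    refine Set.eq_empty_of_forall_notMem fun x ⟨hx, hx_le⟩ => ?_
    obtain ⟨y, hy, hy_lt⟩ := h_lt x hx
    exact hy_lt.not_ge (Set.mem_iInter₂.mp hx_le y hy)
  obtain ⟨y, hy, hy_lt⟩ := Sion.exists_lt_iInf_of_lt_iInf_of_finite hK hK_compact lsc
    (fun y hy => (convexOn_left y hy).quasiconvexOn) hL
    (fun x hx => (continuousOn_right x hx).upperSemicontinuousOn)
    (fun x hx => (concaveOn_right x hx).quasiconcaveOn) hK_convex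
    (s.finite_toSet.image Subtype.val) (Subtype.coe_image_subset L s)
    fun x hx => (hs x hx).imp' _ fun y hy => ⟨Set.mem_image_of_mem _ hy.1, hy.2⟩
  obtain ⟨x, hx, hx_le⟩ := h y hy
  exact (hy_lt x hx).not_ge hx_le

lemma convexOn_sum_mul {X : Type*} {K : Set E} (hK : Convex ℝ K) {s : Finset X} {P : X → ℝ}
    {f : X → E → ℝ} (hP : ∀ x ∈ s, 0 ≤ P x) (hf : ∀ x ∈ s, ConvexOn ℝ K (f x)) :
    ConvexOn ℝ K fun y => ∑ x ∈ s, P x * f x y := by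
  refine ⟨hK, fun y hy z hz a b ha hb hab => ?_⟩
  calc ∑ x ∈ s, P x * f x (a • y + b • z)
      ≤ ∑ x ∈ s, P x * (a * f x y + b * f x z) := Finset.sum_le_sum fun x hx =>
        mul_le_mul_of_nonneg_left ((hf x hx).2 hy hz ha hb hab) (hP x hx)
    _ = a * ∑ x ∈ s, P x * f x y + b * ∑ x ∈ s, P x * f x z := by
        simp_rw [mul_add, Finset.sum_add_distrib, mul_left_comm (P _), ← Finset.mul_sum]

lemma concaveOn_sum_mul {X : Type*} {K : Set E} (hK : Convex ℝ K) {s : Finset X} {P : X → ℝ}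
    {f : X → E → ℝ} (hP : ∀ x ∈ s, 0 ≤ P x) (hf : ∀ x ∈ s, ConcaveOn ℝ K (f x)) :
    ConcaveOn ℝ K fun y => ∑ x ∈ s, P x * f x y := by
  rw [← neg_convexOn_iff]
  refine (convexOn_sum_mul hK hP fun x hx => (hf x hx).neg).congr fun y _ => ?_
  simp only [Pi.neg_apply, mul_neg, Finset.sum_neg_distrib]

lemma concaveOn_log_comp {K : Set E} {f : E → ℝ} (hf : ConcaveOn ℝ K f)
    (hpos : ∀ y ∈ K, 0 < f y) : ConcaveOn ℝ K fun y => Real.log (f y) :=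
  ⟨hf.1, fun _ hy _ hz _ _ ha hb hab =>
    (strictConcaveOn_log_Ioi.concaveOn.2 (hpos _ hy) (hpos _ hz) ha hb hab).trans
      (Real.log_le_log (convex_Ioi (0 : ℝ) (hpos _ hy) (hpos _ hz) ha hb hab)
        (hf.2 hy hz ha hb hab))⟩

end Minimax

section Lagrangian

variable {X ι : Type*} [Fintype X] [Fintype ι] [DecidableEq ι] {A F : Matrix ι ι ℂ}
  {S : X → Matrix ι ι ℂ} {P : X → ℝ} {c ρ : ℝ}

/-- The contribution `-(1 + ρ) log Tr(A^{1/(1+ρ)} F^{ρ/(1+ρ)})` of one letter with signal state `A`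
to `E0cc`. -/
def letterExponent (A F : Matrix ι ι ℂ) (ρ : ℝ) : ℝ :=
  -((1 + ρ) * Real.log (mpow A (1 / (1 + ρ)) * mpow F (ρ / (1 + ρ))).trace.re)

/-- The function whose sup-inf over `ρ ≥ 0` and density operators `F` is the sphere packing
exponent `Espcc S r P`. -/
def lagrangian (S : X → Matrix ι ι ℂ) (P : X → ℝ) (r : ℝ) (F : Matrix ι ι ℂ) (ρ : ℝ) : ℝ :=
  ∑ x, P x * letterExponent (S x) F ρ - ρ * r

lemma div_one_add_mem_Icc (hρ : 0 ≤ ρ) : ρ / (1 + ρ) ∈ Set.Icc (0 : ℝ) 1 :=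
  ⟨by positivity, (div_le_one (by positivity)).mpr (by linarith)⟩

lemma letterExponent_eq_tiltExponent (hA : A.PosSemidef) (hF : F.PosDef) (hρ : 0 ≤ ρ) :
    letterExponent A F ρ = tiltExponent (nsLeft hA.1 hF.1) (nsRight hA.1 hF.1) ρ := by
  rw [letterExponent, re_trace_mpow_mul_mpow_eq_tiltSum hA hF hρ, tiltExponent]

lemma re_trace_mpow_mul_mpow_pos (hA : IsDensity A) (hF : F.PosDef) (hρ : 0 ≤ ρ) :
    0 < (mpow A (1 / (1 + ρ)) * mpow F (ρ / (1 + ρ))).trace.re := by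
  rw [re_trace_mpow_mul_mpow_eq_tiltSum hA.1 hF hρ]
  exact (isHypothesisPair_ns hA hF).tiltSum_pos ρ

lemma continuousOn_lagrangian_left (hS : ∀ x, IsDensity (S x)) (P : X → ℝ) (r : ℝ) (hρ : 0 ≤ ρ)
    (hc : 0 < c) : ContinuousOn (lagrangian S P r · ρ) (densityGe ι c) :=
  ContinuousOn.sub (continuousOn_finsetSum _ fun x _ => continuousOn_const.mul <|
    ContinuousOn.neg <| continuousOn_const.mul <|
    (continuousOn_re_trace_mul_mpow _ _ hc).log fun _ hF =>
      (re_trace_mpow_mul_mpow_pos (hS x) (posDef_of_mem_densityGe hc hF) hρ).ne')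
    continuousOn_const

lemma convexOn_letterExponent_left (hA : IsDensity A) (hρ : 0 ≤ ρ) (hc : 0 < c) :
    ConvexOn ℝ (densityGe ι c) (letterExponent A · ρ) :=
  ((concaveOn_log_comp (concaveOn_re_trace_mul_mpow (posSemidef_mpow hA.1 _) hc
    (div_one_add_mem_Icc hρ)) fun _ hF =>
      re_trace_mpow_mul_mpow_pos hA (posDef_of_mem_densityGe hc hF) hρ).smul
        (by linarith : 0 ≤ 1 + ρ)).neg

lemma convexOn_lagrangian_left (hS : ∀ x, IsDensity (S x)) (hP : ∀ x, 0 ≤ P x) (r : ℝ)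
    (hρ : 0 ≤ ρ) (hc : 0 < c) : ConvexOn ℝ (densityGe ι c) (lagrangian S P r · ρ) :=
  (convexOn_sum_mul (convex_densityGe c) (fun x _ => hP x)
    fun x _ => convexOn_letterExponent_left (hS x) hρ hc).sub
    (concaveOn_const _ (convex_densityGe c))

lemma continuousOn_lagrangian_right (hS : ∀ x, IsDensity (S x)) (hF : F.PosDef) (P : X → ℝ)
    (r : ℝ) : ContinuousOn (lagrangian S P r F) (Set.Ici 0) :=
  ContinuousOn.sub (continuousOn_finsetSum _ fun x _ => continuousOn_const.mul <|
    (isHypothesisPair_ns (hS x) hF).continuousOn_tiltExponent.congr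
      fun _ hρ => letterExponent_eq_tiltExponent (hS x).1 hF hρ)
    (continuousOn_id.mul continuousOn_const)

lemma concaveOn_lagrangian_right (hS : ∀ x, IsDensity (S x)) (hF : F.PosDef) (hP : ∀ x, 0 ≤ P x)
    (r : ℝ) : ConcaveOn ℝ (Set.Ici 0) (lagrangian S P r F) :=
  (concaveOn_sum_mul (convex_Ici 0) (fun x _ => hP x) fun x _ =>
    (isHypothesisPair_ns (hS x) hF).concaveOn_tiltExponent.congr
      fun _ hρ => (letterExponent_eq_tiltExponent (hS x).1 hF hρ).symm).sub
    ((LinearMap.mulRight ℝ r).convexOn (convex_Ici 0))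

lemma letterExponent_mixWithUniform_le [Nonempty ι] (hA : A.PosSemidef) (hF : IsDensity F)
    (hρ : 0 ≤ ρ) (hc : 0 < c)
    (hpos : 0 < (mpow A (1 / (1 + ρ)) * mpow F (ρ / (1 + ρ))).trace.re) :
    letterExponent A (mixWithUniform (Real.exp (-c)) F) ρ ≤
      letterExponent A F ρ + (1 + ρ) * c := by
  have log_le := Real.log_le_log (mul_pos (Real.exp_pos (-c)) hpos)
    (mul_re_trace_mul_mpow_le (posSemidef_mpow hA _) hF (Real.exp_pos _).le
      (Real.exp_lt_one_iff.mpr (neg_lt_zero.mpr hc)) (div_one_add_mem_Icc hρ))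
  rw [Real.log_mul (Real.exp_pos _).ne' hpos.ne', Real.log_exp] at log_le
  have := mul_le_mul_of_nonneg_left log_le (by linarith : 0 ≤ 1 + ρ)
  unfold letterExponent
  linarith

lemma lagrangian_mixWithUniform_le [Nonempty ι] (hS : ∀ x, IsDensity (S x)) (hP : IsProbDist P)
    (r : ℝ) (hF : IsDensity F) (hρ : 0 ≤ ρ) (hc : 0 < c)
    (hpos : ∀ x, 0 < P x → 0 < (mpow (S x) (1 / (1 + ρ)) * mpow F (ρ / (1 + ρ))).trace.re) :
    lagrangian S P (r + c) (mixWithUniform (Real.exp (-c)) F) ρ ≤ lagrangian S P r F ρ + c := by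
  have sum_le : ∑ x, P x * letterExponent (S x) (mixWithUniform (Real.exp (-c)) F) ρ ≤
      ∑ x, P x * (letterExponent (S x) F ρ + (1 + ρ) * c) := by
    refine Finset.sum_le_sum fun x _ => ?_
    obtain h_zero | h_pos := (hP.1 x).eq_or_lt
    · rw [← h_zero, zero_mul, zero_mul]
    · exact mul_le_mul_of_nonneg_left
        (letterExponent_mixWithUniform_le (hS x).1 hF hρ hc (hpos x h_pos)) h_pos.le
  simp_rw [mul_add, Finset.sum_add_distrib, ← Finset.sum_mul, hP.2] at sum_le
  unfold lagrangian
  linarith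

end Lagrangian

section SpherePackingExponent

variable {X : Type*} [Fintype X] {P : X → ℝ}

lemma ereal_coe_sum (f : X → ℝ) : ((∑ x, f x : ℝ) : EReal) = ∑ x, (f x : EReal) :=
  map_sum (⟨⟨Real.toEReal, EReal.coe_zero⟩, EReal.coe_add⟩ : ℝ →+ EReal) f Finset.univ

lemma coe_mul_negLog_ne_bot {a : ℝ} (ha : 0 ≤ a) (u : ℝ) : (a : EReal) * negLog u ≠ ⊥ := by
  unfold negLog
  split_ifs
  · obtain rfl | h_pos := ha.eq_or_lt
    · simp
    · simp [EReal.coe_mul_top_of_pos h_pos]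
  · rw [← EReal.coe_mul]
    exact EReal.coe_ne_bot _

lemma sum_coe_mul_negLog_eq_top (hP : ∀ x, 0 ≤ P x) {T : X → ℝ} {x : X} (hx : 0 < P x)
    (hT : T x ≤ 0) : ∑ x, (P x : EReal) * negLog (T x) = ⊤ := by
  classical
  rw [← Finset.add_sum_erase _ _ (Finset.mem_univ x), negLog, if_pos hT,
    EReal.coe_mul_top_of_pos hx]
  refine EReal.top_add_of_ne_bot (Finset.sum_induction _ (· ≠ ⊥)
    (fun _ _ hu hv => EReal.add_ne_bot_iff.mpr ⟨hu, hv⟩) EReal.zero_ne_bot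
    fun y _ => coe_mul_negLog_ne_bot (hP y) _)

lemma sum_coe_mul_negLog_eq (hP : ∀ x, 0 ≤ P x) {T : X → ℝ} (hT : ∀ x, 0 < P x → 0 < T x) :
    ∑ x, (P x : EReal) * negLog (T x) = ((∑ x, P x * -Real.log (T x) : ℝ) : EReal) := by
  rw [ereal_coe_sum]
  refine Finset.sum_congr rfl fun x _ => ?_
  obtain h_zero | h_pos := (hP x).eq_or_lt
  · simp [← h_zero]
  · rw [negLog, if_neg (hT x h_pos).not_ge, EReal.coe_mul]

variable {d : ℕ} {S : X → Matrix (Fin d) (Fin d) ℂ} {r r' t ρ : ℝ}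

lemma exists_lagrangian_lt_of_Espcc_lt (hP : ∀ x, 0 ≤ P x) (h : Espcc S r P < t) (hρ : 0 ≤ ρ) :
    ∃ F, IsDensity F ∧
      (∀ x, 0 < P x → 0 < (mpow (S x) (1 / (1 + ρ)) * mpow F (ρ / (1 + ρ))).trace.re) ∧
      lagrangian S P r F ρ < t := by
  have hρ' : (0 : ℝ) < 1 + ρ := by positivity
  have E0cc_lt : E0cc S ρ P < ((t + ρ * r : ℝ) : EReal) := by
    have := (le_iSup (fun ρ : {ρ : ℝ // 0 ≤ ρ} => E0cc S ρ.1 P - ((ρ.1 * r : ℝ) : EReal))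
      ⟨ρ, hρ⟩).trans_lt h
    rwa [EReal.coe_add,
      ← EReal.sub_lt_iff (Or.inl (EReal.coe_ne_bot _)) (Or.inl (EReal.coe_ne_top _))]
  obtain ⟨⟨F, hF⟩, hF_lt⟩ := iInf_lt_iff.mp E0cc_lt
  have hpos : ∀ x, 0 < P x →
      0 < (mpow (S x) (1 / (1 + ρ)) * mpow F (ρ / (1 + ρ))).trace.re := by
    intro x hx
    by_contra! hT
    rw [sum_coe_mul_negLog_eq_top hP hx hT, EReal.coe_mul_top_of_pos hρ'] at hF_lt
    exact not_top_lt hF_lt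
  refine ⟨F, hF, hpos, ?_⟩
  rw [sum_coe_mul_negLog_eq hP hpos, ← EReal.coe_mul, EReal.coe_lt_coe_iff] at hF_lt
  simp_rw [lagrangian, letterExponent, ← mul_neg, mul_left_comm (P _), ← Finset.mul_sum]
  linarith

lemma IsProbDist.nonempty (hP : IsProbDist P) : Nonempty X := by
  by_contra! hX
  simpa using hP.2

lemma IsDensity.nonempty {ι : Type*} [Fintype ι] [DecidableEq ι] {F : Matrix ι ι ℂ}
    (hF : IsDensity F) : Nonempty ι := by
  by_contra! hι
  simpa [Matrix.trace] using hF.2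

lemma exists_forall_lagrangian_le_of_Espcc_lt (hS : ∀ x, IsDensity (S x)) (hP : IsProbDist P)
    (h : Espcc S r P < t) {c : ℝ} (hc : 0 < c) :
    ∃ F : Matrix (Fin d) (Fin d) ℂ, F.PosDef ∧ F.trace = 1 ∧
      ∀ ρ, 0 ≤ ρ → lagrangian S P (r + c) F ρ ≤ t + c := by
  obtain ⟨x⟩ := hP.nonempty
  have : Nonempty (Fin d) := (hS x).nonempty
  set η := (1 - Real.exp (-c)) * (Fintype.card (Fin d) : ℝ)⁻¹
  have hη : 0 < η :=
    mul_pos (sub_pos.mpr (Real.exp_lt_one_iff.mpr (neg_lt_zero.mpr hc))) (by positivity)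
  have mix_mem {F} (hF : IsDensity F) : mixWithUniform (Real.exp (-c)) F ∈ densityGe (Fin d) η :=
    mixWithUniform_mem_densityGe hF (Real.exp_pos _).le
  obtain ⟨F, hF, hF_le⟩ := exists_forall_le_of_forall_exists_le ⟨_, mix_mem (hS x)⟩
    (isCompact_densityGe hη) (convex_densityGe η) (convex_Ici 0)
    (fun ρ hρ => continuousOn_lagrangian_left hS P (r + c) hρ hη)
    (fun ρ hρ => convexOn_lagrangian_left hS hP.1 (r + c) hρ hη)
    (fun F hF => continuousOn_lagrangian_right hS (posDef_of_mem_densityGe hη hF) P (r + c))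
    (fun F hF => concaveOn_lagrangian_right hS (posDef_of_mem_densityGe hη hF) hP.1 (r + c))
    (t := t + c) fun ρ hρ => by
      obtain ⟨F, hF, hpos, hF_lt⟩ := exists_lagrangian_lt_of_Espcc_lt hP.1 h hρ
      exact ⟨_, mix_mem hF, (lagrangian_mixWithUniform_le hS hP r hF hρ hc hpos).trans
        (add_le_add_left hF_lt.le c)⟩
  exact ⟨F, posDef_of_mem_densityGe hη hF, hF.1, hF_le⟩

lemma exists_forall_lagrangian_le (hS : ∀ x, IsDensity (S x)) (hP : IsProbDist P)
    (h : Espcc S r P < t) (hr : r < r') :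
    ∃ F : Matrix (Fin d) (Fin d) ℂ, F.PosDef ∧ F.trace = 1 ∧
      ∀ ρ, 0 ≤ ρ → lagrangian S P r' F ρ ≤ t := by
  obtain ⟨t₀, h₀, ht₀⟩ := EReal.lt_iff_exists_real_btwn.mp h
  have ht₀ : t₀ < t := EReal.coe_lt_coe_iff.mp ht₀
  set c := min (r' - r) (t - t₀)
  obtain ⟨F, hF, hF_trace, hF_le⟩ := exists_forall_lagrangian_le_of_Espcc_lt hS hP h₀
    (lt_min (sub_pos.mpr hr) (sub_pos.mpr ht₀) : 0 < c)
  refine ⟨F, hF, hF_trace, fun ρ hρ => ?_⟩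
  have hcr : r + c ≤ r' := by linarith [min_le_left (r' - r) (t - t₀)]
  calc lagrangian S P r' F ρ ≤ lagrangian S P (r + c) F ρ :=
        sub_le_sub_left (mul_le_mul_of_nonneg_left hcr hρ) _
    _ ≤ t₀ + c := hF_le ρ hρ
    _ ≤ t := by linarith [min_le_right (r' - r) (t - t₀)]

end SpherePackingExponent

section POVM

open Matrix

variable {ι : Type*} [Fintype ι] [DecidableEq ι] {M : ℕ} {L : Fin M → Matrix ι ι ℂ}

lemma IsPOVM.posSemidef_one_sub (hL : IsPOVM L) (m : Fin M) : (1 - L m).PosSemidef := by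
  have others : (∑ i ∈ Finset.univ.erase m, L i).PosSemidef :=
    posSemidef_sum _ fun i _ => hL.1 i
  have h := hL.2.add others
  rwa [← Finset.add_sum_erase _ _ (Finset.mem_univ m), ← sub_sub, sub_add_cancel] at h

lemma IsPOVM.sum_re_trace_mul_le_one (hL : IsPOVM L) {σ : Matrix ι ι ℂ} (hσ : IsDensity σ) :
    ∑ m, (L m * σ).trace.re ≤ 1 := by
  have h := re_trace_mul_nonneg hL.2 hσ.1
  rwa [Matrix.sub_mul, Matrix.one_mul, trace_sub, hσ.2, Matrix.sum_mul, trace_sum, Complex.sub_re,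
    Complex.one_re, Complex.re_sum, sub_nonneg] at h

lemma IsPOVM.exists_re_trace_mul_le_exp_neg (hL : IsPOVM L) {σ : Matrix ι ι ℂ} (hσ : IsDensity σ)
    {b : ℝ} (hb : Real.exp b ≤ M) : ∃ m, (L m * σ).trace.re ≤ Real.exp (-b) := by
  have hM : 0 < M := Nat.cast_pos.mp ((Real.exp_pos b).trans_le hb)
  have : Nonempty (Fin M) := ⟨⟨0, hM⟩⟩
  obtain ⟨m, -, hm⟩ := Finset.exists_le_of_sum_le (f := fun m => (L m * σ).trace.re)
    (g := fun _ => Real.exp (-b)) Finset.univ_nonempty <| by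
      calc ∑ m, (L m * σ).trace.re ≤ Real.exp b * Real.exp (-b) := by
            rw [← Real.exp_add, add_neg_cancel, Real.exp_zero]
            exact hL.sum_re_trace_mul_le_one hσ
        _ ≤ M * Real.exp (-b) := mul_le_mul_of_nonneg_right hb (Real.exp_pos _).le
        _ = ∑ _ : Fin M, Real.exp (-b) := by simp
  exact ⟨m, hm⟩

end POVM

section Coding

open Matrix

variable {X : Type*} {d n M : ℕ} {S : X → Matrix (Fin d) (Fin d) ℂ}
  {F : Matrix (Fin d) (Fin d) ℂ} {v : X → Fin d × Fin d → ℝ} {δ : ℝ}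

lemma le_maxError (S : X → Matrix (Fin d) (Fin d) ℂ) (w : Fin M → Fin n → X)
    (L : Fin M → Matrix (Fin n → Fin d) (Fin n → Fin d) ℂ) (m : Fin M) :
    1 - (L m * signalState S (w m)).trace.re ≤ maxError S w L :=
  le_ciSup (f := fun m => 1 - (L m * signalState S (w m)).trace.re)
    (Set.finite_range _).bddAbove m

lemma isDensity_signalState (hS : ∀ x, IsDensity (S x)) (w : Fin n → X) :
    IsDensity (signalState S w) :=
  isDensity_piTensor fun k => hS (w k)

lemma eventually_quarter_min_exp_kl_le_test_error [Finite X] (hS : ∀ x, IsDensity (S x))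
    (hF : F.PosDef) (hv : ∀ x, IsProbDist (v x))
    (hvS : ∀ x, support (v x) ⊆ support (nsLeft (hS x).1.1 hF.1)) (hδ : 0 < δ) :
    ∀ᶠ n : ℕ in atTop, ∀ (w : Fin n → X) (L : Matrix (Fin n → Fin d) (Fin n → Fin d) ℂ),
      L.PosSemidef → (1 - L).PosSemidef → ∀ γ ≥ 0,
      1 / 4 * min (Real.exp (-(∑ k, kl (v (w k)) (nsLeft (hS (w k)).1.1 hF.1) + n * δ)))
        (γ * Real.exp (-(∑ k, kl (v (w k)) (nsRight (hS (w k)).1.1 hF.1) + n * δ))) ≤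
      1 - (L * signalState S w).trace.re + γ * (L * piTensor fun _ => F).trace.re := by
  have pair x := isHypothesisPair_ns (hS x) hF
  filter_upwards [eventually_half_min_exp_kl_le_sum_min (fun x => (pair x).isProbDist.1)
    (fun x => (pair x).nonneg_right) hv hvS (fun x => (hvS x).trans (pair x).support_subset) hδ]
    with n hn w L hL hL' γ hγ
  have quantum_le := half_sum_min_prod_ns_le (fun k => (hS (w k)).1)
    (fun _ => hF.posSemidef) hL hL' hγ
  change _ ≤ ((1 - L) * signalState S w).trace.re + _ at quantum_le
  rw [Matrix.sub_mul, Matrix.one_mul, trace_sub, (isDensity_signalState hS w).2, Complex.sub_re,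
    Complex.one_re] at quantum_le
  linarith [hn w γ hγ]

lemma inv_mul_negLog_le (hn : 0 < n) {a e : ℝ} (h : Real.exp (-(n * a)) ≤ e) :
    (((n : ℝ)⁻¹ : ℝ) : EReal) * negLog e ≤ a := by
  have log_le : -Real.log e ≤ n * a := by
    rw [neg_le]
    exact (Real.le_log_iff_exp_le ((Real.exp_pos _).trans_le h)).mpr h
  rw [negLog, if_neg ((Real.exp_pos _).trans_le h).not_ge, ← EReal.coe_mul, EReal.coe_le_coe_iff,
    inv_mul_le_iff₀ (Nat.cast_pos.mpr hn)]
  exact log_le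

lemma exp_neg_le_of_quarter_min_exp_le {a b s e τ : ℝ} (hs : Real.exp (-s) ≤ 1 / 8)
    (hτ : τ ≤ Real.exp (-(b + 2 * s)))
    (h : ∀ γ ≥ 0, 1 / 4 * min (Real.exp (-(a + s))) (γ * Real.exp (-(b + s))) ≤ e + γ * τ) :
    Real.exp (-(a + 2 * s)) ≤ e := by
  -- With this `γ` the two terms of the minimum coincide.
  have balanced := h (Real.exp (b - a)) (Real.exp_pos _).le
  have shift : Real.exp (b - a) * Real.exp (-(b + s)) = Real.exp (-(a + s)) := by
    rw [← Real.exp_add]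
    ring_nf
  have shift' : Real.exp (b - a) * Real.exp (-(b + 2 * s)) = Real.exp (-(a + 2 * s)) := by
    rw [← Real.exp_add]
    ring_nf
  have split : Real.exp (-(a + 2 * s)) = Real.exp (-(a + s)) * Real.exp (-s) := by
    rw [← Real.exp_add]
    ring_nf
  rw [shift, min_self] at balanced
  have second_le := mul_le_mul_of_nonneg_left hτ (Real.exp_pos (b - a)).le
  rw [shift'] at second_le
  have small := mul_le_mul_of_nonneg_left hs (Real.exp_pos (-(a + s))).le
  linarith

variable [Fintype X]

lemma tendsto_condKl {Z : Type*} [Fintype Z] {Pn : ℕ → X → ℝ} {P : X → ℝ}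
    (hPn : Tendsto Pn atTop (nhds P)) (v u : X → Z → ℝ) :
    Tendsto (fun n => condKl (Pn n) v u) atTop (nhds (condKl P v u)) :=
  tendsto_finsetSum _ fun x _ => (tendsto_pi_nhds.mp hPn x).mul_const _

variable [DecidableEq X]

lemma sum_apply_eq_sum_composition_mul (w : Fin n → X) (f : X → ℝ) :
    ∑ k, f (w k) = n * ∑ x, composition w x * f x := by
  obtain rfl | hn := n.eq_zero_or_pos
  · simp
  rw [Finset.mul_sum, ← Finset.sum_fiberwise Finset.univ w]
  refine Finset.sum_congr rfl fun x _ => ?_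
  calc ∑ k with w k = x, f (w k) = ∑ k with w k = x, f x :=
        Finset.sum_congr rfl fun k hk => by rw [(Finset.mem_filter.mp hk).2]
    _ = n * (composition w x * f x) := by
        rw [Finset.sum_const, nsmul_eq_mul, composition]
        field_simp

lemma eventually_exp_le_maxError (hS : ∀ x, IsDensity (S x)) (hF : F.PosDef) (hF' : F.trace = 1)
    (hv : ∀ x, IsProbDist (v x))
    (hvS : ∀ x, support (v x) ⊆ support (nsLeft (hS x).1.1 hF.1)) (hδ : 0 < δ) :
    ∀ᶠ n : ℕ in atTop, ∀ (M : ℕ) (w : Fin M → Fin n → X)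
      (L : Fin M → Matrix (Fin n → Fin d) (Fin n → Fin d) ℂ) (Q : X → ℝ) (R : ℝ),
      Real.exp (n * R) ≤ M → (∀ m, composition (w m) = Q) → IsPOVM L →
      condKl Q v (fun x => nsRight (hS x).1.1 hF.1) + 2 * δ ≤ R →
      Real.exp (-(n * (condKl Q v (fun x => nsLeft (hS x).1.1 hF.1) + 2 * δ))) ≤
        maxError S w L := by
  filter_upwards [eventually_quarter_min_exp_kl_le_test_error hS hF hv hvS hδ,
    eventually_exp_neg_mul_le hδ (ε := 1 / 8) (by norm_num)]
    with n test_le exp_le M w L Q R hM hQ hL hR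
  obtain ⟨m, hm⟩ := hL.exists_re_trace_mul_le_exp_neg
    (isDensity_piTensor fun _ : Fin n => ⟨hF.posSemidef, hF'⟩) hM
  have test_le := test_le (w m) (L m) (hL.1 m) (hL.posSemidef_one_sub m)
  rw [sum_apply_eq_sum_composition_mul (w m) fun x => kl (v x) (nsLeft (hS x).1.1 hF.1),
    sum_apply_eq_sum_composition_mul (w m) fun x => kl (v x) (nsRight (hS x).1.1 hF.1),
    hQ m] at test_le
  have trace_le := hm.trans <| Real.exp_le_exp.mpr <|
    neg_le_neg (mul_le_mul_of_nonneg_left hR (Nat.cast_nonneg (α := ℝ) n))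
  rw [mul_add, mul_left_comm] at trace_le ⊢
  exact (exp_neg_le_of_quarter_min_exp_le exp_le trace_le test_le).trans (le_maxError S w L m)

lemma le_Pemax {R e : ℝ} {Q : X → ℝ} (hQ : ∃ w : Fin n → X, composition w = Q)
    (h : ∀ (M : ℕ) (w : Fin M → Fin n → X)
      (L : Fin M → Matrix (Fin n → Fin d) (Fin n → Fin d) ℂ),
      Real.exp (n * R) ≤ M → (∀ m, composition (w m) = Q) → IsPOVM L → e ≤ maxError S w L) :
    e ≤ Pemax S n R Q := by
  refine le_csInf ?_ ?_
  · obtain ⟨w, hw⟩ := hQ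
    exact ⟨_, ⌈Real.exp (n * R)⌉₊, fun _ => w, fun _ => 0, Nat.le_ceil _, fun _ => hw,
      ⟨fun _ => PosSemidef.zero, by simpa using PosSemidef.one⟩, rfl⟩
  · rintro _ ⟨M, w, L, hM, hw, hL, rfl⟩
    exact h M w L hM hw hL

theorem relE_le_condKl (hS : ∀ x, IsDensity (S x)) (hF : F.PosDef) (hF' : F.trace = 1)
    (hv : ∀ x, IsProbDist (v x))
    (hvS : ∀ x, support (v x) ⊆ support (nsLeft (hS x).1.1 hF.1)) {P : X → ℝ} {R : ℝ}
    (hR : condKl P v (fun x => nsRight (hS x).1.1 hF.1) < R) :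
    relE S R P ≤ (condKl P v fun x => nsLeft (hS x).1.1 hF.1 : ℝ) := by
  refine EReal.le_of_forall_lt_iff_le.mp fun t ht => ?_
  have ht := sub_pos.mpr (EReal.coe_lt_coe_iff.mp ht)
  set p := fun x => nsLeft (hS x).1.1 hF.1
  set q := fun x => nsRight (hS x).1.1 hF.1
  obtain ⟨δ, hδ, hδt, hδR⟩ : ∃ δ : ℝ, 0 < δ ∧ condKl P v p + 3 * δ ≤ t ∧
      condKl P v q + 3 * δ ≤ R :=
    ⟨min ((t - condKl P v p) / 3) ((R - condKl P v q) / 3),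
      lt_min (by linarith) (by linarith [sub_pos.mpr hR]),
      by linarith [min_le_left ((t - condKl P v p) / 3) ((R - condKl P v q) / 3)],
      by linarith [min_le_right ((t - condKl P v p) / 3) ((R - condKl P v q) / 3)]⟩
  refine iSup_le fun ⟨Pn, hPn, hPn_comp⟩ => limsup_le_of_le (by isBoundedDefault) ?_
  filter_upwards [eventually_exp_le_maxError hS hF hF' hv hvS hδ,
    (tendsto_condKl hPn v p).eventually_lt_const (lt_add_of_pos_right _ hδ),
    (tendsto_condKl hPn v q).eventually_lt_const (lt_add_of_pos_right _ hδ),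
    eventually_gt_atTop 0] with n exp_le hp hq hn
  refine (inv_mul_negLog_le hn (le_Pemax (hPn_comp n) fun M w L hM hw hL =>
    exp_le M w L (Pn n) R hM hw hL (by linarith))).trans ?_
  exact EReal.coe_le_coe_iff.mpr (by linarith)

end Coding

/-- **Sphere packing bound for constant composition codes over classical-quantum
channels**: `E(R,P) ≤ E_sp^cc(R-ε, P)`. -/
theorem sphere_packing_bound_constant_composition
    {X : Type*} [Fintype X] [DecidableEq X] {d : ℕ}
    (S : X → Matrix (Fin d) (Fin d) ℂ) (hS : ∀ x, IsDensity (S x))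
    (P : X → ℝ) (hP : IsProbDist P)
    (R : ℝ) (hR : 0 < R) (ε : ℝ) (hε : 0 < ε) (hεR : ε < R) :
    relE S R P ≤ Espcc S (R - ε) P := by
  refine EReal.le_of_forall_lt_iff_le.mp fun t ht => ?_
  obtain ⟨F, hF, hF', lagrangian_le⟩ :=
    exists_forall_lagrangian_le hS hP ht (r' := R - ε / 2) (by linarith)
  have pair x := isHypothesisPair_ns (hS x) hF
  obtain ⟨ρ, hρ, left_le, right_le⟩ :=
    exists_condKl_tilt_le hP.1 pair (r := R - ε / 2) (r' := R - ε / 4) (by linarith)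
      fun ρ hρ => by
        simpa only [lagrangian, letterExponent_eq_tiltExponent (hS _).1 hF hρ]
          using lagrangian_le ρ hρ
  calc relE S R P
      ≤ (condKl P (fun x => tilt (nsLeft (hS x).1.1 hF.1) (nsRight (hS x).1.1 hF.1) ρ)
          fun x => nsLeft (hS x).1.1 hF.1 : ℝ) :=
        relE_le_condKl hS hF hF' (fun x => (pair x).isProbDist_tilt ρ)
          (fun x => support_tilt_subset _ _ hρ) (by linarith)
    _ ≤ t := EReal.coe_le_coe_iff.mpr left_le

end SPB
end
end

section
/- For a pure-state classical-quantum channel, the constant-composition E_0 coefficient is bounded by the cutoff rate: if S_x = |ψ_x⟩⟨ψ_x| is a rank-one projection for every x ∈ X, then for every probability distribution P on X and every ρ ≥ 0, E_0^cc(ρ,P) ≤ (1+ρ) R_∞(P), where R_∞(P) = min over density operators F on H of −Σ_{x∈X} P(x) log Tr(S_x F). -/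
open scoped BigOperators ComplexOrder
noncomputable section

namespace SPB

/-- The pure state (rank-one projection) `|ψ⟩⟨ψ|` associated with a vector `ψ ∈ ℂ^d`. -/
def pureState {d : ℕ} (ψ : Fin d → ℂ) : Matrix (Fin d) (Fin d) ℂ :=
  Matrix.of fun i j => ψ i * (starRingEnd ℂ) (ψ j)

/-- The cutoff rate `R_∞(P) = min_F -∑ₓ P(x) log Tr(Sₓ F)` (for pure-state channels). -/
def RinfPure {X : Type*} [Fintype X] {d : ℕ} (S : X → Matrix (Fin d) (Fin d) ℂ)
    (P : X → ℝ) : EReal :=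
  ⨅ F : {F : Matrix (Fin d) (Fin d) ℂ // IsDensity F},
    ∑ x, ((P x : ℝ) : EReal) * negLog ((Matrix.trace (S x * F.1)).re)

/-!
A matrix `0 ≤ A ≤ 1` has its eigenvalues in `[0, 1]`, where `t ≤ t ^ r` for every `r ≤ 1`, so
`A ≤ A ^ r` in the Loewner order. Density operators, and pure states in particular, are of this
kind, so `Tr (Sₓ F) ≤ Tr (Sₓ ^ (1 / (1 + ρ)) F ^ (ρ / (1 + ρ)))`, and the inequality holds for each
`F` separately, before the minimum is taken.
-/

theorem negLog_antitone : Antitone negLog := by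
  intro a b hab
  unfold negLog
  split_ifs with hb ha ha
  · exact le_rfl
  · exact absurd (hab.trans hb) ha
  · exact le_top
  · exact_mod_cast neg_le_neg (Real.log_le_log (not_le.mp ha) hab)

theorem le_mul_iInf_iff {κ : Sort*} {a c : EReal} {f : κ → EReal} (hc : 0 < c) (hc' : c ≠ ⊤) :
    a ≤ c * ⨅ k, f k ↔ ∀ k, a ≤ c * f k := by
  simp_rw [← EReal.div_le_iff_le_mul hc hc', le_iInf_iff]

section MatrixOrder

open scoped MatrixOrder

section Trace

variable {n 𝕜 : Type*} [Fintype n] [RCLike 𝕜] {A A' B B' : Matrix n n 𝕜}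

theorem trace_mul_le_trace_mul_of_le_left (hA : A ≤ A') (hB : 0 ≤ B) :
    (A * B).trace ≤ (A' * B).trace := by
  classical
  obtain ⟨C, rfl⟩ := CStarAlgebra.nonneg_iff_eq_star_mul_self.mp hB
  have trace_cycle (M : Matrix n n 𝕜) : (M * (star C * C)).trace = (C * M * star C).trace := by
    rw [← Matrix.mul_assoc, Matrix.trace_mul_comm, ← Matrix.mul_assoc]
  rw [trace_cycle, trace_cycle, ← sub_nonneg, ← Matrix.trace_sub]
  exact (Matrix.le_iff.mp (star_right_conjugate_le_conjugate hA C)).trace_nonneg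

theorem trace_mul_le_trace_mul (hA : A ≤ A') (hB : B ≤ B') (hA' : 0 ≤ A') (hB₀ : 0 ≤ B) :
    (A * B).trace ≤ (A' * B').trace :=
  calc (A * B).trace
    _ ≤ (A' * B).trace := trace_mul_le_trace_mul_of_le_left hA hB₀
    _ = (B * A').trace := Matrix.trace_mul_comm _ _
    _ ≤ (B' * A').trace := trace_mul_le_trace_mul_of_le_left hB hA'
    _ = (A' * B').trace := Matrix.trace_mul_comm _ _

end Trace

variable {n : Type*} [Fintype n] [DecidableEq n] {A B : Matrix n n ℂ} {r s : ℝ}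

theorem mpow_eq_cfc (hA : A.IsHermitian) (r : ℝ) :
    mpow A r = cfc (fun t : ℝ ↦ if t = 0 then 0 else t ^ r) A := by
  rw [hA.cfc_eq, Matrix.IsHermitian.cfc, Unitary.conjStarAlgAut_apply, mpow, dif_pos hA]
  rfl

theorem le_mpow (hA₀ : 0 ≤ A) (hA₁ : A ≤ 1) (hr : r ≤ 1) : A ≤ mpow A r := by
  have hA : IsSelfAdjoint A := .of_nonneg hA₀
  have continuousOn_spectrum (f : ℝ → ℝ) : ContinuousOn f (spectrum ℝ A) :=
    (Matrix.finite_real_spectrum (A := A)).continuousOn f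
  conv_lhs => rw [← cfc_id' ℝ A]
  rw [mpow_eq_cfc hA]
  refine cfc_mono (fun t ht ↦ ?_) (continuousOn_spectrum _) (continuousOn_spectrum _)
  have ht₀ : 0 ≤ t := spectrum_nonneg_of_nonneg hA₀ ht
  have ht₁ : t ≤ 1 := (CFC.le_one_iff A).mp hA₁ t ht
  split_ifs with h
  · exact h.le
  · exact Real.self_le_rpow_of_le_one ht₀ ht₁ hr

theorem trace_mul_le_trace_mpow_mul_mpow (hA₀ : 0 ≤ A) (hA₁ : A ≤ 1) (hB₀ : 0 ≤ B) (hB₁ : B ≤ 1)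
    (hr : r ≤ 1) (hs : s ≤ 1) : (A * B).trace ≤ (mpow A r * mpow B s).trace :=
  have hA : A ≤ mpow A r := le_mpow hA₀ hA₁ hr
  trace_mul_le_trace_mul hA (le_mpow hB₀ hB₁ hs) (hA₀.trans hA) hB₀

theorem IsDensity.le_one_s12 (hA : IsDensity A) : A ≤ 1 := by
  have hherm : A.IsHermitian := hA.1.isHermitian
  have eigenvalues_sum : ∑ i, hherm.eigenvalues i = 1 := by
    have h := hherm.trace_eq_sum_eigenvalues.symm.trans hA.2
    apply RCLike.ofReal_injective (K := ℂ)
    simpa only [RCLike.ofReal_sum, RCLike.ofReal_one] using h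
  refine (CFC.le_one_iff (R := ℝ) A hherm).mpr fun t ht ↦ ?_
  obtain ⟨i, rfl⟩ := hherm.spectrum_real_eq_range_eigenvalues ▸ ht
  rw [← eigenvalues_sum]
  exact Finset.single_le_sum (fun j _ ↦ hA.1.eigenvalues_nonneg j) (Finset.mem_univ i)

theorem pureState_isDensity {d : ℕ} {ψ : Fin d → ℂ} (hψ : ∑ i, Complex.normSq (ψ i) = 1) :
    IsDensity (pureState ψ) := by
  refine ⟨Matrix.posSemidef_vecMulVec_self_star ψ, ?_⟩
  simp only [pureState, Matrix.trace, Matrix.diag_apply, Matrix.of_apply, Complex.mul_conj]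
  exact_mod_cast hψ

theorem E0cc_le_one_add_rho_mul_Rinf_general {X : Type*} [Fintype X] {d : ℕ}
    {S : X → Matrix (Fin d) (Fin d) ℂ} (hS₀ : ∀ x, 0 ≤ S x) (hS₁ : ∀ x, S x ≤ 1)
    {P : X → ℝ} (hP : ∀ x, 0 ≤ P x) {ρ : ℝ} (hρ : 0 ≤ ρ) :
    E0cc S ρ P ≤ ((1 + ρ : ℝ) : EReal) * RinfPure S P := by
  have hpos : 0 < 1 + ρ := by positivity
  have hr : 1 / (1 + ρ) ≤ 1 := (div_le_one hpos).mpr (by linarith)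
  have hs : ρ / (1 + ρ) ≤ 1 := (div_le_one hpos).mpr (by linarith)
  refine (le_mul_iInf_iff (mod_cast hpos) (EReal.coe_ne_top _)).mpr fun F ↦ (iInf_le _ F).trans ?_
  have negLog_trace_le (x : X) :
      negLog (mpow (S x) (1 / (1 + ρ)) * mpow F.1 (ρ / (1 + ρ))).trace.re ≤
        negLog (S x * F.1).trace.re :=
    negLog_antitone <| Complex.re_le_re <|
      trace_mul_le_trace_mpow_mul_mpow (hS₀ x) (hS₁ x) F.2.1.nonneg F.2.le_one_s12 hr hs
  gcongr with x
  · exact_mod_cast hP x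
  · exact negLog_trace_le x

end MatrixOrder

/-- **For a pure-state classical-quantum channel, the constant-composition `E₀` coefficient is
bounded by the cutoff rate**: `E₀^cc(ρ,P) ≤ (1+ρ) R_∞(P)`. -/
theorem E0cc_le_one_add_rho_mul_Rinf
    {X : Type*} [Fintype X] [DecidableEq X] {d : ℕ}
    (ψ : X → Fin d → ℂ) (hψ : ∀ x, ∑ i, Complex.normSq (ψ x i) = 1)
    (P : X → ℝ) (hP : IsProbDist P) (ρ : ℝ) (hρ : 0 ≤ ρ) :
    E0cc (fun x => pureState (ψ x)) ρ P ≤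
      ((1 + ρ : ℝ) : EReal) * RinfPure (fun x => pureState (ψ x)) P := by
  have hS (x : X) : IsDensity (pureState (ψ x)) := pureState_isDensity (hψ x)
  exact E0cc_le_one_add_rho_mul_Rinf_general (fun x ↦ (hS x).1.nonneg) (fun x ↦ (hS x).le_one_s12)
    hP.1 hρ

end SPB
end
end
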